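/- arXiv:1605.08509 — 2 statements merged into one kernel-verified Lean document; each statement's English description precedes it below -/
import Mathlib

section
/- Let $n \geq 2$ and let $\beta_1, \dots, \beta_n$ be integers with $\beta_j \geq 3$ for all $j$, and suppose $\beta_n = \beta_{\max} = \max\{\beta_1,\dots,\beta_n\}$. For $t > 0$ let $\tilde{\lambda}(t) = (0,\dots,0,t) \in \mathbb{R}^n$ and $I(\tilde{\lambda}(t)) = \int_{\mathbb{S}^{n-1}} e^{i t\, y_n^{\beta_n}} d\sigma(y)$. Then there is a constant $a_0 > 0$ such that $|I(\tilde{\lambda}(t))| = a_0\, t^{-1/\beta_{\max}} + o\big(t^{-1/\beta_{\max}}\big)$ as $t \to \infty$; equivalently, $\lim_{t\to\infty} t^{1/\beta_{\max}} |I(\tilde{\lambda}(t))| = a_0 > 0$. In particular, the decay estimate $|I(\lambda)| \lesssim |\lambda|^{-1/\beta_{\max}}$ is optimal. -/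
open MeasureTheory Filter
open scoped ENNReal Topology

noncomputable def ph (t x : ℝ) : ℂ := Complex.exp (Complex.I * Complex.ofReal (t * x))

lemma ph_norm (t x : ℝ) : ‖ph t x‖ = 1 := by
  unfold ph; exact Complex.norm_exp_I_mul_ofReal _

lemma ph_cont (t : ℝ) : Continuous (ph t) := by unfold ph; fun_prop

lemma vdc (φ φ' q q' : ℝ → ℝ) (x y t : ℝ) (hxy : x ≤ y) (ht : 0 < t)
    (hφ : ∀ s ∈ Set.Icc x y, HasDerivAt φ (φ' s) s)
    (hq : ∀ s ∈ Set.Icc x y, HasDerivAt q (q' s) s)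
    (cφ : ContinuousOn φ' (Set.Icc x y)) (cq : ContinuousOn q' (Set.Icc x y)) :
    ‖∫ s in x..y, ph t (φ s) * ((φ' s * q s : ℝ) : ℂ)‖
      ≤ (|q x| + |q y| + ∫ s in x..y, |q' s|) / t := by
  have hI : (Complex.I * (t : ℂ)) ≠ 0 := by simp [ht.ne']
  have hv : ∀ s ∈ Set.uIcc x y,
      HasDerivAt (fun s => ph t (φ s) / (Complex.I * t)) (ph t (φ s) * (φ' s : ℂ)) s := by
    intro s hs
    rw [Set.uIcc_of_le hxy] at hs
    have h1 := (((hφ s hs).const_mul t).ofReal_comp.const_mul Complex.I).cexp.div_const (Complex.I * t)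
    unfold ph
    refine h1.congr_deriv ?_
    have ht' : (t : ℂ) ≠ 0 := by exact_mod_cast ht.ne'
    push_cast
    field_simp
  have hu : ∀ s ∈ Set.uIcc x y, HasDerivAt (fun s => ((q s : ℝ) : ℂ)) ((q' s : ℝ) : ℂ) s := by
    intro s hs
    rw [Set.uIcc_of_le hxy] at hs
    exact (hq s hs).ofReal_comp
  have cφ0 : ContinuousOn φ (Set.Icc x y) := fun s hs => (hφ s hs).continuousAt.continuousWithinAt
  have i1 : IntervalIntegrable (fun s => ((q' s : ℝ) : ℂ)) volume x y := by
    apply ContinuousOn.intervalIntegrable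
    rw [Set.uIcc_of_le hxy]
    exact Complex.continuous_ofReal.comp_continuousOn cq
  have i2 : IntervalIntegrable (fun s => ph t (φ s) * (φ' s : ℂ)) volume x y := by
    apply ContinuousOn.intervalIntegrable
    rw [Set.uIcc_of_le hxy]
    exact ((ph_cont t).comp_continuousOn cφ0).mul (Complex.continuous_ofReal.comp_continuousOn cφ)
  have key := intervalIntegral.integral_mul_deriv_eq_deriv_mul hu hv i1 i2
  have e : (∫ s in x..y, ph t (φ s) * ((φ' s * q s : ℝ) : ℂ))
      = ∫ s in x..y, ((q s : ℝ) : ℂ) * (ph t (φ s) * (φ' s : ℂ)) := by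
    congr 1; ext s; push_cast; ring
  have nI : ‖Complex.I * (t : ℂ)‖ = t := by simp [abs_of_pos ht]
  have b3 : ‖∫ s in x..y, ((q' s : ℝ) : ℂ) * (ph t (φ s) / (Complex.I * t))‖
      ≤ (∫ s in x..y, |q' s|) / t := by
    refine (intervalIntegral.norm_integral_le_integral_norm hxy).trans (le_of_eq ?_)
    rw [← intervalIntegral.integral_div]
    congr 1; ext s
    rw [norm_mul, norm_div, ph_norm, nI]; simp; rfl
  have b1 : ‖((q y : ℝ) : ℂ) * (ph t (φ y) / (Complex.I * t))‖ = |q y| / t := by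
    rw [norm_mul, norm_div, ph_norm, nI]; simp; rfl
  have b2 : ‖((q x : ℝ) : ℂ) * (ph t (φ x) / (Complex.I * t))‖ = |q x| / t := by
    rw [norm_mul, norm_div, ph_norm, nI]; simp; rfl
  rw [e, key]
  refine (norm_sub_le _ _).trans ?_
  refine (add_le_add (norm_sub_le _ _) b3).trans ?_
  rw [b1, b2]
  apply le_of_eq; ring

lemma vdcA (φ φ' f q q' : ℝ → ℝ) (b C : ℝ) (p l : ℕ) (hp : 1 ≤ p)
    (hC : 0 ≤ C) (hb : 0 < b)
    (hφ : ∀ s, HasDerivAt φ (φ' s) s) (cφ : Continuous φ') (cf : Continuous f)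
    (hq : ∀ s ∈ Set.Ioc 0 b, HasDerivAt q (q' s) s)
    (cq : ContinuousOn q' (Set.Ioc 0 b))
    (hf : ∀ s ∈ Set.Ioc 0 b, f s = φ' s * q s)
    (bf : ∀ s ∈ Set.Ioc 0 b, |f s| ≤ C * s ^ l)
    (bq : ∀ s ∈ Set.Ioc 0 b, |q s| ≤ C / s ^ p)
    (bq' : ∀ s ∈ Set.Ioc 0 b, |q' s| ≤ C / s ^ (p+1))
    (t δ : ℝ) (ht : 0 < t) (hδ : 0 < δ) (hδb : δ ≤ b) :
    ‖∫ s in (0:ℝ)..b, ph t (φ s) * ((f s : ℝ) : ℂ)‖ ≤ C * δ ^ (l+1) + 3 * C / (t * δ ^ p) := by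
  have cφ0 : Continuous φ := continuous_iff_continuousAt.2 fun s => (hφ s).continuousAt
  have cint : Continuous (fun s => ph t (φ s) * ((f s : ℝ) : ℂ)) :=
    ((ph_cont t).comp cφ0).mul (Complex.continuous_ofReal.comp cf)
  rw [← intervalIntegral.integral_add_adjacent_intervals (cint.intervalIntegrable 0 δ)
    (cint.intervalIntegrable δ b)]
  refine (norm_add_le _ _).trans (add_le_add ?_ ?_)
  · have := intervalIntegral.norm_integral_le_of_norm_le_const (a := 0) (b := δ) (C := C * δ ^ l)
      (f := fun s => ph t (φ s) * ((f s : ℝ) : ℂ)) (by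
        intro s hs
        rw [Set.uIoc_of_le hδ.le] at hs
        rw [norm_mul, ph_norm, one_mul, Complex.norm_real, Real.norm_eq_abs]
        refine (bf s ⟨hs.1, hs.2.trans hδb⟩).trans ?_
        have := hs.1.le
        gcongr
        exact hs.2)
    refine this.trans (le_of_eq ?_)
    rw [sub_zero, abs_of_pos hδ]; ring
  · have sub : Set.Icc δ b ⊆ Set.Ioc 0 b := fun s hs => ⟨hδ.trans_le hs.1, hs.2⟩
    have e : (∫ s in δ..b, ph t (φ s) * ((f s : ℝ) : ℂ))
        = ∫ s in δ..b, ph t (φ s) * ((φ' s * q s : ℝ) : ℂ) := by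
      apply intervalIntegral.integral_congr
      intro s hs
      rw [Set.uIcc_of_le hδb] at hs
      simp only [hf s (sub hs)]
    rw [e]
    refine (vdc φ φ' q q' δ b t hδb ht (fun s _ => hφ s) (fun s hs => hq s (sub hs))
      cφ.continuousOn (cq.mono sub)).trans ?_
    have h1 : |q δ| ≤ C / δ ^ p := bq δ ⟨hδ, hδb⟩
    have h2 : |q b| ≤ C / b ^ p := bq b ⟨hb, le_rfl⟩
    have h3 : ∫ s in δ..b, |q' s| ≤ C / δ ^ p - C / b ^ p := by
      have hd : ∀ s ∈ Set.uIcc δ b, HasDerivAt (fun s => - (C / s ^ p)) (C * p / s ^ (p+1)) s := by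
        intro s hs
        rw [Set.uIcc_of_le hδb] at hs
        have hs0 : s ≠ 0 := (hδ.trans_le hs.1).ne'
        have := (((hasDerivAt_pow p s).inv (pow_ne_zero _ hs0)).const_mul C).neg
        obtain ⟨k, rfl⟩ : ∃ k, p = k + 1 := ⟨p - 1, by omega⟩
        refine HasDerivAt.congr_deriv this ?_
        simp only [Nat.add_sub_cancel]
        field_simp
        ring
      have ci : ContinuousOn (fun s : ℝ => C * p / s ^ (p+1)) (Set.Icc δ b) := by
        apply ContinuousOn.div continuousOn_const (by fun_prop)
        intro s hs; exact pow_ne_zero _ (hδ.trans_le hs.1).ne'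
      have := intervalIntegral.integral_eq_sub_of_hasDerivAt hd
        (ContinuousOn.intervalIntegrable (by rwa [Set.uIcc_of_le hδb]))
      calc ∫ s in δ..b, |q' s| ≤ ∫ s in δ..b, C * p / s ^ (p+1) := by
            apply intervalIntegral.integral_mono_on hδb
            · apply ContinuousOn.intervalIntegrable
              rw [Set.uIcc_of_le hδb]; exact (cq.mono sub).abs
            · apply ContinuousOn.intervalIntegrable
              rwa [Set.uIcc_of_le hδb]
            · intro s hs
              refine (bq' s (sub hs)).trans ?_
              have : 0 < s := (sub hs).1
              gcongr
              have : (1:ℝ) ≤ p := by exact_mod_cast hp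
              nlinarith
        _ = _ := by rw [this]; ring
    have h4 : 0 ≤ C / δ ^ p := by positivity
    rw [show 3 * C / (t * δ ^ p) = (3 * (C / δ ^ p)) / t by field_simp]
    gcongr
    linarith
lemma gam (β : ℕ) (hβ : 1 ≤ β) (c : ℂ) (hc : 0 < c.re) :
    IntegrableOn (fun s : ℝ => Complex.exp (-c * (s : ℂ) ^ β)) (Set.Ioi 0) ∧ 
    ∫ s in Set.Ioi (0:ℝ), Complex.exp (-c * (s : ℂ) ^ β) = c ^ (-(1 / (β : ℂ))) * (Real.Gamma (1 / β + 1) : ℝ) := by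
  have hβ0 : (0:ℝ) < β := by exact_mod_cast hβ
  have hint : ∀ b : ℝ, 0 < b → IntegrableOn (fun s : ℝ => Real.exp (-b * s ^ β)) (Set.Ioi 0) := by
    intro b hb
    have := integrableOn_rpow_mul_exp_neg_mul_rpow (p := β) (s := 0) (b := b) (by norm_num) (by exact_mod_cast hβ) hb
    simpa using this
  have hval : ∀ b : ℝ, 0 < b → ∫ s in Set.Ioi (0:ℝ), Real.exp (-b * s ^ β) = b ^ (-(1 / (β:ℝ))) * Real.Gamma (1 / β + 1) := by
    intro b hb
    have := integral_exp_neg_mul_rpow (p := β) hβ0 hb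
    simp only [Real.rpow_natCast] at this
    rw [this]; congr 2; ring
  refine ⟨?_, ?_⟩
  · rw [IntegrableOn, ← integrable_norm_iff]
    · refine (hint c.re hc).congr ?_
      filter_upwards with s
      rw [Complex.norm_exp]
      congr 1
      rw [← Complex.ofReal_pow, Complex.re_mul_ofReal]; simp
    · exact (by fun_prop : Continuous (fun s : ℝ => Complex.exp (-c * (s : ℂ) ^ β))).aestronglyMeasurable
  · set X : ℝ → ℝ := fun s => -s ^ β
    set μ : Measure ℝ := volume.restrict (Set.Ioi 0)
    have hsub : Set.Ioi 0 ⊆ interior (ProbabilityTheory.integrableExpSet X μ) := by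
      apply interior_maximal _ isOpen_Ioi
      intro b hb
      have := hint b hb
      show Integrable (fun s => Real.exp (b * X s)) μ
      simpa [X, IntegrableOn, μ] using this
    have hU : IsOpen {z : ℂ | 0 < z.re} := isOpen_lt continuous_const Complex.continuous_re
    have d1 : DifferentiableOn ℂ (ProbabilityTheory.complexMGF X μ) {z : ℂ | 0 < z.re} :=
      ProbabilityTheory.differentiableOn_complexMGF.mono (fun z hz => hsub hz)
    have d2 : DifferentiableOn ℂ (fun z : ℂ => z ^ (-(1 / (β : ℂ))) * (Real.Gamma (1 / β + 1) : ℝ)) {z : ℂ | 0 < z.re} := by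
      intro z hz
      refine DifferentiableAt.differentiableWithinAt ?_
      refine DifferentiableAt.mul_const ?_ _
      exact differentiableAt_id.cpow_const (Or.inl hz)
    have hconn : IsPreconnected {z : ℂ | 0 < z.re} := (convex_halfSpace_re_gt 0).isPreconnected
    have key := (d1.analyticOnNhd hU).eqOn_of_preconnected_of_frequently_eq (d2.analyticOnNhd hU) hconn
      (z₀ := 1) (by simp) (by
        have hreal : ∀ b : ℝ, 0 < b → ProbabilityTheory.complexMGF X μ b = (b : ℂ) ^ (-(1 / (β : ℂ))) * (Real.Gamma (1 / β + 1) : ℝ) := by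
          intro b hb
          rw [ProbabilityTheory.complexMGF_ofReal]
          have := hval b hb
          rw [ProbabilityTheory.mgf]
          have e : (∫ s, Real.exp (b * X s) ∂μ) = b ^ (-(1 / (β:ℝ))) * Real.Gamma (1 / β + 1) := by
            rw [← this]; simp [X, μ]
          rw [e]
          push_cast [Complex.ofReal_cpow hb.le]
          rfl
        have ht : Tendsto (fun k : ℕ => (((1 + 1 / ((k:ℝ) + 1) : ℝ)) : ℂ)) atTop (𝓝[≠] 1) := by
          rw [tendsto_nhdsWithin_iff]
          constructor
          · have : Tendsto (fun k : ℕ => (1 + 1 / ((k:ℝ) + 1) : ℝ)) atTop (𝓝 (1 + 0)) :=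
              tendsto_one_div_add_atTop_nhds_zero_nat.const_add 1
            have := (Complex.continuous_ofReal.tendsto _).comp this
            simpa only [add_zero, Complex.ofReal_one] using! this
          · filter_upwards with k
            have : (1 + 1 / ((k:ℝ) + 1) : ℝ) ≠ 1 := by
              have : (0:ℝ) < 1 / ((k:ℝ)+1) := by positivity
              linarith
            intro h
            exact this (Complex.ofReal_injective (by rw [Complex.ofReal_one]; exact h))
        refine ht.frequently ?_
        refine Frequently.of_forall fun k => hreal _ (by positivity)) hc
    refine Eq.trans ?_ key
    rw [ProbabilityTheory.complexMGF]
    congr 1; ext s; simp [X]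

lemma gamlim (β : ℕ) (hβ : 2 ≤ β) :
    ∃ L : ℂ, 0 < L.re ∧ Tendsto (fun t : ℝ => ((t ^ (1 / (β:ℝ)) : ℝ) : ℂ) *
      ∫ s in Set.Ioi (0:ℝ), Complex.exp (-(1 - Complex.I * t) * (s : ℂ) ^ β)) atTop (𝓝 L) := by
  have hβ1 : (1:ℝ) < β := by exact_mod_cast hβ
  have hβ0 : (0:ℝ) < β := by linarith
  refine ⟨(-Complex.I) ^ (-(1 / (β : ℂ))) * (Real.Gamma (1 / β + 1) : ℝ), ?_, ?_⟩
  · rw [Complex.re_mul_ofReal]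
    apply mul_pos _ (Real.Gamma_pos_of_pos (by positivity))
    rw [Complex.cpow_def_of_ne_zero (by simp), Complex.log_neg_I]
    rw [show -(↑Real.pi / 2) * Complex.I * -(1 / (β:ℂ)) = ((Real.pi / 2 * (1 / (β:ℝ)) : ℝ) : ℂ) * Complex.I by
      push_cast; ring]
    rw [Complex.exp_ofReal_mul_I_re]
    apply Real.cos_pos_of_mem_Ioo
    have h2 : 0 < Real.pi / 2 * (1 / (β:ℝ)) := by positivity
    refine ⟨by linarith [Real.pi_pos], ?_⟩
    have h : (1 / (β:ℝ)) < 1 := by rw [div_lt_one hβ0]; exact hβ1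
    nlinarith [Real.pi_pos]
  · have h1 : Tendsto (fun t : ℝ => ((t⁻¹ : ℝ) : ℂ) - Complex.I) atTop (𝓝 (-Complex.I)) := by
      have := (Complex.continuous_ofReal.tendsto _).comp tendsto_inv_atTop_zero
      have := this.sub_const Complex.I
      simpa using! this
    have h2 := (h1.cpow (tendsto_const_nhds (x := -(1 / (β : ℂ)))) (by simp [Complex.mem_slitPlane_iff])).mul_const
      ((Real.Gamma (1 / β + 1) : ℝ) : ℂ)
    refine h2.congr' ?_
    filter_upwards [eventually_gt_atTop 0] with t ht
    rw [(gam β (by omega) _ (by simp)).2, ← mul_assoc]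
    congr 1
    have ht' : (t:ℂ) ≠ 0 := by exact_mod_cast ht.ne'
    have hz : (1 - Complex.I * (t:ℂ)) = (t:ℂ) * ((t⁻¹ : ℝ) - Complex.I) := by
      push_cast; field_simp
    have hne : ((t⁻¹ : ℝ) : ℂ) - Complex.I ≠ 0 := by
      intro h; have := congrArg Complex.im h; simp at this
    rw [hz, Complex.ofReal_cpow ht.le, Complex.cpow_def_of_ne_zero hne,
      Complex.cpow_def_of_ne_zero (mul_ne_zero ht' hne), Complex.cpow_def_of_ne_zero ht',
      Complex.log_ofReal_mul ht hne, ← Complex.exp_add]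
    congr 1
    rw [Complex.ofReal_log ht.le]
    push_cast; ring

lemma tail_bound (j : ℕ) (b : ℝ) (hb : 0 < b) : ∃ K : ℝ, ∀ t : ℝ, 0 < t →
    ‖∫ s in Set.Ioi b, Complex.exp (-(1 - Complex.I * t) * (s : ℂ) ^ (j+2))‖ ≤ K / t := by
  set q : ℝ → ℝ := fun s => Real.exp (-s ^ (j+2)) * (s ^ (j+1))⁻¹ * ((j:ℝ)+2)⁻¹ with hq
  set q' : ℝ → ℝ := fun s => - (Real.exp (-s ^ (j+2)) * (1 + ((j:ℝ)+1) / (((j:ℝ)+2) * s ^ (j+2)))) with hq'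
  have qpos : ∀ s, 0 < s → 0 < q s := fun s hs => by simp only [hq]; positivity
  have q'neg : ∀ s, 0 < s → q' s ≤ 0 := fun s hs => by
    simp only [hq']; rw [neg_nonpos]; positivity
  have hd : ∀ s, 0 < s → HasDerivAt q (q' s) s := by
    intro s hs
    have h1 := (hasDerivAt_pow (j+2) s).neg.exp
    have h2 := (hasDerivAt_pow (j+1) s).inv (pow_ne_zero _ hs.ne')
    refine ((h1.mul h2).mul_const _).congr_deriv ?_
    simp only [hq', Nat.add_sub_cancel]
    simp
    field_simp
    ring
  have hc : ∀ x y, 0 < x → ContinuousOn q' (Set.Icc x y) := by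
    intro x y hx
    have : ∀ s ∈ Set.Icc x y, ((j:ℝ)+2) * s ^ (j+2) ≠ 0 := by
      intro s hs
      have : 0 < s := hx.trans_le hs.1
      positivity
    simp only [hq']
    fun_prop (disch := assumption)
  refine ⟨2 * q b, fun t ht => ?_⟩
  have hi := (gam (j+2) (by omega) (1 - Complex.I * t) (by simp)).1.mono_set (Set.Ioi_subset_Ioi hb.le)
  have hl := intervalIntegral_tendsto_integral_Ioi b hi tendsto_id
  refine le_of_tendsto hl.norm ?_
  filter_upwards [eventually_ge_atTop b] with R hR
  have hR0 : 0 < R := hb.trans_le hR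
  have e : ∫ s in b..R, Complex.exp (-(1 - Complex.I * t) * (s : ℂ) ^ (j+2))
      = ∫ s in b..R, ph t (s ^ (j+2)) * (((((j+2 : ℕ) : ℝ) * s ^ (j+2-1)) * q s : ℝ) : ℂ) := by
    apply intervalIntegral.integral_congr
    intro s hs
    rw [Set.uIcc_of_le hR] at hs
    have hs0 : 0 < s := hb.trans_le hs.1
    have : (((j+2 : ℕ) : ℝ) * s ^ (j+2-1)) * q s = Real.exp (-s ^ (j+2)) := by
      simp only [hq]; push_cast
      field_simp
    simp only [this]
    unfold ph
    push_cast
    rw [← Complex.exp_add]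
    congr 1; ring
  simp only [id]
  rw [e]
  refine (vdc (fun s => s ^ (j+2)) _ q q' b R t hR ht (fun s _ => hasDerivAt_pow (j+2) s)
    (fun s hs => hd s (hb.trans_le hs.1)) (by fun_prop) (hc b R hb)).trans ?_
  have : ∫ s in b..R, |q' s| = q b - q R := by
    have e1 : ∫ s in b..R, |q' s| = ∫ s in b..R, - q' s := by
      apply intervalIntegral.integral_congr
      intro s hs
      rw [Set.uIcc_of_le hR] at hs
      exact abs_of_nonpos (q'neg s (hb.trans_le hs.1))
    rw [e1, intervalIntegral.integral_neg, intervalIntegral.integral_eq_sub_of_hasDerivAt (f := q)]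
    · ring
    · intro s hs
      rw [Set.uIcc_of_le hR] at hs
      exact hd s (hb.trans_le hs.1)
    · apply ContinuousOn.intervalIntegrable
      rw [Set.uIcc_of_le hR]; exact hc b R hb
  rw [this, abs_of_pos (qpos b hb), abs_of_pos (qpos R hR0)]
  apply le_of_eq; ring

lemma main_piece (β : ℕ) (hβ : 3 ≤ β) (b : ℝ) (hb : 0 < b) :
    ∃ L : ℂ, 0 < L.re ∧ Tendsto (fun t : ℝ => ((t ^ (1 / (β:ℝ)) : ℝ) : ℂ) *
      ∫ s in (0:ℝ)..b, ph t (s ^ β) * ((Real.exp (-s ^ β) : ℝ) : ℂ)) atTop (𝓝 L) := by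
  obtain ⟨L, hL, h⟩ := gamlim β (by omega)
  refine ⟨L, hL, ?_⟩
  obtain ⟨j, rfl⟩ : ∃ j, β = j + 2 := ⟨β - 2, by omega⟩
  obtain ⟨K, hK⟩ := tail_bound j b hb
  have h0 : Tendsto (fun t : ℝ => ((t ^ (1 / ((j+2:ℕ):ℝ)) : ℝ) : ℂ) *
      ∫ s in Set.Ioi b, Complex.exp (-(1 - Complex.I * t) * (s : ℂ) ^ (j+2))) atTop (𝓝 0) := by
    have hlt : 1 / ((j+2:ℕ):ℝ) - 1 < 0 := by
      have : (1:ℝ) < ((j+2:ℕ):ℝ) := by exact_mod_cast (by omega : 1 < j + 2)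
      have := (div_lt_one (by linarith)).2 this
      linarith
    have := (tendsto_rpow_neg_atTop (y := -(1 / ((j+2:ℕ):ℝ) - 1)) (by linarith)).const_mul K
    rw [mul_zero] at this
    refine squeeze_zero_norm' ?_ this
    filter_upwards [eventually_gt_atTop 0] with t ht
    rw [norm_mul, Complex.norm_real, Real.norm_of_nonneg (by positivity), neg_neg, Real.rpow_sub_one ht.ne']
    calc _ ≤ t ^ (1 / ((j+2:ℕ):ℝ)) * (K / t) := by gcongr; exact hK t ht
      _ = _ := by ring
  have h1 := h.sub h0
  rw [sub_zero] at h1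
  refine h1.congr ?_
  intro t
  rw [← mul_sub]
  congr 1
  have hi := (gam (j+2) (by omega) (1 - Complex.I * t) (by simp)).1
  have := intervalIntegral.integral_interval_add_Ioi hi (hi.mono_set (Set.Ioi_subset_Ioi hb.le))
  rw [← this, add_sub_cancel_right]
  congr 1; ext s
  unfold ph
  push_cast
  rw [← Complex.exp_add]
  congr 1; ring

lemma vdcB (φ φ' f E : ℝ → ℝ) (k j p : ℕ) (hk : k = p + j) (hp : 1 ≤ p) (hj : j ≤ 1)
    (hφ : ∀ s, HasDerivAt φ (φ' s) s) (cφ : Continuous φ') (cf : Continuous f)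
    (hE : ContDiffOn ℝ 1 E (Set.Ioo (-(Real.pi/2)) (Real.pi/2)))
    (hE0 : j = 1 → E 0 = 0)
    (hf : ∀ s ∈ Set.Ioc 0 (Real.pi/4), f s = φ' s * (E s * (Real.sin s ^ k)⁻¹))
    (Cf : ℝ) (hCf : 0 ≤ Cf) (bf : ∀ s ∈ Set.Ioc 0 (Real.pi/4), |f s| ≤ Cf * (|E s| + s ^ j)) :
    ∃ K : ℝ, 0 ≤ K ∧ ∀ t δ : ℝ, 0 < t → 0 < δ → δ ≤ Real.pi/4 →
    ‖∫ s in (0:ℝ)..(Real.pi/4), ph t (φ s) * ((f s : ℝ) : ℂ)‖ ≤ K * (δ ^ (j+1) + 1 / (t * δ ^ p)) := by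
  have hpi := Real.pi_pos
  have hpi4 := Real.pi_le_four
  have sub : Set.Icc 0 (Real.pi/4) ⊆ Set.Ioo (-(Real.pi/2)) (Real.pi/2) := fun s hs =>
    ⟨by linarith [hs.1], by linarith [hs.2]⟩
  have cE' := (hE.continuousOn_deriv_of_isOpen isOpen_Ioo le_rfl).mono sub
  have cE := hE.continuousOn.mono sub
  have hd : ∀ s ∈ Set.Icc 0 (Real.pi/4), HasDerivAt E (deriv E s) s := fun s hs =>
    ((hE.differentiableOn (by norm_num)).differentiableAt (isOpen_Ioo.mem_nhds (sub hs))).hasDerivAt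
  obtain ⟨C1, hC1⟩ := isCompact_Icc.exists_bound_of_continuousOn cE'
  obtain ⟨C0, hC0⟩ := isCompact_Icc.exists_bound_of_continuousOn cE
  have hz : (0:ℝ) ∈ Set.Icc 0 (Real.pi/4) := ⟨le_rfl, by positivity⟩
  have C1n : 0 ≤ C1 := (norm_nonneg _).trans (hC1 0 hz)
  have C0n : 0 ≤ C0 := (norm_nonneg _).trans (hC0 0 hz)
  obtain ⟨C2, C2n, hC2⟩ : ∃ C2, 0 ≤ C2 ∧ ∀ s ∈ Set.Icc 0 (Real.pi/4), |E s| ≤ C2 * s ^ j := by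
    rcases Nat.le_one_iff_eq_zero_or_eq_one.1 hj with h | h
    · subst h
      exact ⟨C0, C0n, fun s hs => by simpa using hC0 s hs⟩
    · refine ⟨C1, C1n, fun s hs => ?_⟩
      have := (convex_Icc 0 (Real.pi/4)).norm_image_sub_le_of_norm_hasDerivWithin_le
        (fun x hx => (hd x hx).hasDerivWithinAt) hC1 hz hs
      rw [hE0 h] at this
      simpa [h, abs_of_nonneg hs.1] using this
  have hsin : ∀ s ∈ Set.Ioc 0 (Real.pi/4), s / 2 ≤ Real.sin s := by
    intro s hs
    have h1 := Real.mul_le_sin hs.1.le (by linarith [hs.2])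
    refine le_trans ?_ h1
    have : (1:ℝ)/2 ≤ 2 / Real.pi := by rw [div_le_div_iff₀ (by norm_num) hpi]; linarith
    nlinarith [hs.1]
  have hsinp : ∀ s ∈ Set.Ioc 0 (Real.pi/4), 0 < Real.sin s := fun s hs =>
    lt_of_lt_of_le (by linarith [hs.1]) (hsin s hs)
  have hinv : ∀ s ∈ Set.Ioc 0 (Real.pi/4), ∀ m : ℕ, (Real.sin s ^ m)⁻¹ ≤ 2 ^ m / s ^ m := by
    intro s hs m
    have := hs.1
    rw [← div_pow, ← inv_pow]
    gcongr
    · exact inv_nonneg.2 (hsinp s hs).le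
    · rw [inv_le_comm₀ (hsinp s hs) (by positivity), inv_div]
      exact hsin s hs
  set C : ℝ := Cf * (C2 + 1) + C2 * 2 ^ k + C1 * 2 ^ k + k * C2 * 2 ^ (k+1) with hC
  have n1 : 0 ≤ Cf * (C2 + 1) := by positivity
  have n2 : 0 ≤ C2 * 2 ^ k := by positivity
  have n3 : 0 ≤ C1 * 2 ^ k := by positivity
  have n4 : 0 ≤ k * C2 * 2 ^ (k+1) := by positivity
  have Cn : 0 ≤ C := by positivity
  set q : ℝ → ℝ := fun s => E s * (Real.sin s ^ k)⁻¹ with hq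
  set q' : ℝ → ℝ := fun s => deriv E s * (Real.sin s ^ k)⁻¹ - k * E s * Real.cos s * (Real.sin s ^ (k+1))⁻¹ with hq'
  have sub' : Set.Ioc 0 (Real.pi/4) ⊆ Set.Icc 0 (Real.pi/4) := Set.Ioc_subset_Icc_self
  have key := vdcA φ φ' f q q' (Real.pi/4) C p j hp Cn (by positivity) hφ cφ cf ?_ ?_ hf ?_ ?_ ?_
  · refine ⟨3 * C, by positivity, fun t δ ht hδ hδb => (key t δ ht hδ hδb).trans ?_⟩
    have : 0 ≤ C * δ ^ (j+1) := by positivity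
    have e : 3 * C * (δ ^ (j+1) + 1 / (t * δ ^ p)) = 3 * (C * δ ^ (j+1)) + 3 * C / (t * δ ^ p) := by ring
    rw [e]
    linarith
  · intro s hs
    have h0 := hsinp s hs
    have h1 := ((Real.hasDerivAt_sin s).pow k).inv (pow_ne_zero k h0.ne')
    refine ((hd s (sub' hs)).mul h1).congr_deriv ?_
    simp only [hq']
    obtain ⟨i, rfl⟩ : ∃ i, k = i + 1 := ⟨k - 1, by omega⟩
    simp only [Nat.add_sub_cancel, Pi.pow_apply, Pi.inv_apply]
    field_simp
    ring
  · have h0 : ∀ s ∈ Set.Ioc 0 (Real.pi/4), Real.sin s ^ k ≠ 0 := fun s hs => pow_ne_zero _ (hsinp s hs).ne'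
    have h0' : ∀ s ∈ Set.Ioc 0 (Real.pi/4), Real.sin s ^ (k+1) ≠ 0 := fun s hs => pow_ne_zero _ (hsinp s hs).ne'
    have c1 := cE'.mono sub'
    have c2 := cE.mono sub'
    have c3 : ContinuousOn (fun s => Real.sin s ^ k) (Set.Ioc 0 (Real.pi/4)) := by fun_prop
    have c4 : ContinuousOn (fun s => Real.sin s ^ (k+1)) (Set.Ioc 0 (Real.pi/4)) := by fun_prop
    exact (c1.mul (c3.inv₀ h0)).sub (((continuousOn_const.mul c2).mul Real.continuous_cos.continuousOn).mul (c4.inv₀ h0'))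
  · intro s hs
    have hs0 := hs.1
    calc |f s| ≤ Cf * (|E s| + s ^ j) := bf s hs
      _ ≤ Cf * (C2 * s ^ j + s ^ j) := by gcongr; exact hC2 s (sub' hs)
      _ = (Cf * (C2 + 1)) * s ^ j := by ring
      _ ≤ C * s ^ j := by gcongr; linarith
  · intro s hs
    have hs0 := hs.1
    simp only [hq]
    rw [abs_mul, abs_of_nonneg (inv_nonneg.2 (pow_nonneg (hsinp s hs).le k))]
    calc _ ≤ (C2 * s ^ j) * (2 ^ k / s ^ k) :=
          mul_le_mul (hC2 s (sub' hs)) (hinv s hs k) (inv_nonneg.2 (pow_nonneg (hsinp s hs).le k)) (by positivity)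
      _ = (C2 * 2 ^ k) / s ^ p := by rw [hk, pow_add s]; field_simp
      _ ≤ C / s ^ p := by gcongr; linarith
  · intro s hs
    have hs0 := hs.1
    have hs1 : s ≤ 1 := by linarith [hs.2]
    have b1 : |deriv E s * (Real.sin s ^ k)⁻¹| ≤ (C1 * 2 ^ k) / s ^ (p+1) := by
      rw [abs_mul, abs_of_nonneg (inv_nonneg.2 (pow_nonneg (hsinp s hs).le k))]
      calc _ ≤ C1 * (2 ^ k / s ^ k) :=
          mul_le_mul (hC1 s (sub' hs)) (hinv s hs k) (inv_nonneg.2 (pow_nonneg (hsinp s hs).le k)) (by positivity)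
        _ = (C1 * 2 ^ k) / s ^ k := by ring
        _ ≤ _ := by
          apply div_le_div_of_nonneg_left n3 (by positivity)
          exact pow_le_pow_of_le_one hs0.le hs1 (by omega)
    have b2 : |k * E s * Real.cos s * (Real.sin s ^ (k+1))⁻¹| ≤ (k * C2 * 2 ^ (k+1)) / s ^ (p+1) := by
      rw [abs_mul, abs_of_nonneg (inv_nonneg.2 (pow_nonneg (hsinp s hs).le (k+1))), abs_mul, abs_mul, Nat.abs_cast]
      calc _ ≤ (k * (C2 * s ^ j) * 1) * (2 ^ (k+1) / s ^ (k+1)) := by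
            refine mul_le_mul ?_ (hinv s hs (k+1)) (inv_nonneg.2 (pow_nonneg (hsinp s hs).le _)) (by positivity)
            refine mul_le_mul ?_ (Real.abs_cos_le_one s) (abs_nonneg _) (by positivity)
            exact mul_le_mul_of_nonneg_left (hC2 s (sub' hs)) (by positivity)
        _ = _ := by
          rw [show s ^ (k+1) = s ^ (p+1) * s ^ j by rw [← pow_add]; congr 1; omega]
          field_simp
    refine (abs_sub _ _).trans ((add_le_add b1 b2).trans ?_)
    rw [← add_div]
    gcongr
    linarith

lemma vdcB' (a : ℝ) (j p : ℕ) (ha : a < ((j:ℝ)+1) / ((j:ℝ) + 1 + p)) (G : ℝ → ℂ) (K : ℝ)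
    (h : ∀ t δ : ℝ, 0 < t → 0 < δ → δ ≤ Real.pi/4 → ‖G t‖ ≤ K * (δ ^ (j+1) + 1 / (t * δ ^ p))) :
    Tendsto (fun t : ℝ => ((t ^ a : ℝ) : ℂ) * G t) atTop (𝓝 0) := by
  set D : ℝ := (j:ℝ) + 1 + p with hD
  have Dpos : 0 < D := by positivity
  have h1 : Tendsto (fun t : ℝ => t ^ (-(1/D))) atTop (𝓝 0) := tendsto_rpow_neg_atTop (by positivity)
  have h2 := (tendsto_rpow_neg_atTop (y := -(a - ((j:ℝ)+1)/D)) (by linarith)).const_mul (2 * K)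
  rw [mul_zero] at h2
  refine squeeze_zero_norm' ?_ h2
  filter_upwards [eventually_gt_atTop 0, h1.eventually (ge_mem_nhds (by positivity : 0 < Real.pi/4))] with t ht hδ
  rw [norm_mul, Complex.norm_real, Real.norm_of_nonneg (by positivity), neg_neg]
  have e1 : (t ^ (-(1/D))) ^ (j+1) = t ^ (-(((j:ℝ)+1)/D)) := by
    rw [← Real.rpow_natCast, ← Real.rpow_mul ht.le]; congr 1; push_cast; ring
  have e2 : 1 / (t * (t ^ (-(1/D))) ^ p) = t ^ (-(((j:ℝ)+1)/D)) := by
    rw [← Real.rpow_natCast, ← Real.rpow_mul ht.le]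
    nth_rewrite 1 [← Real.rpow_one t]
    rw [← Real.rpow_add ht, one_div, ← Real.rpow_neg ht.le]
    congr 1
    field_simp
    rw [hD]; ring
  have := h t _ ht (by positivity) hδ
  rw [e1, e2] at this
  calc _ ≤ t ^ a * (K * (t ^ (-(((j:ℝ)+1)/D)) + t ^ (-(((j:ℝ)+1)/D)))) := by gcongr
    _ = 2 * K * (t ^ a * t ^ (-(((j:ℝ)+1)/D))) := by ring
    _ = _ := by rw [← Real.rpow_add ht]; congr 1

lemma cos_ne (s : ℝ) (hs : s ∈ Set.Ioo (-(Real.pi/2)) (Real.pi/2)) : Real.cos s ≠ 0 :=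
  (Real.cos_pos_of_mem_Ioo hs).ne'

lemma piece_near0 (β m : ℕ) (hβ : 3 ≤ β) :
    Tendsto (fun t : ℝ => ((t ^ (1 / (β:ℝ)) : ℝ) : ℂ) *
      ∫ s in (0:ℝ)..(Real.pi/4), ph t (Real.sin s ^ β) *
        ((Real.cos s ^ m - Real.exp (-Real.sin s ^ β) * Real.cos s : ℝ) : ℂ)) atTop (𝓝 0) := by
  obtain ⟨p, rfl⟩ : ∃ p, β = p + 2 := ⟨β - 2, by omega⟩
  have hpi := Real.pi_pos
  obtain ⟨K, -, hK⟩ := vdcB (fun s => Real.sin s ^ (p+2))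
    (fun s => ((p+2:ℕ):ℝ) * Real.sin s ^ (p+1) * Real.cos s)
    (fun s => Real.cos s ^ m - Real.exp (-Real.sin s ^ (p+2)) * Real.cos s)
    (fun s => (Real.cos s ^ m - Real.exp (-Real.sin s ^ (p+2)) * Real.cos s) / (((p+2:ℕ):ℝ) * Real.cos s))
    (p+1) 1 p rfl (by omega) le_rfl
    (fun s => (Real.hasDerivAt_sin s).pow (p+2))
    (by fun_prop) (by fun_prop)
    (by
      apply ContDiffOn.div
      · exact ContDiff.contDiffOn (by fun_prop)
      · exact ContDiff.contDiffOn (by fun_prop)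
      · intro s hs
        exact mul_ne_zero (by positivity) (cos_ne s hs))
    (by intro _; simp)
    (by
      intro s hs
      have h1 : Real.cos s ≠ 0 := cos_ne s ⟨by linarith [hs.1], by linarith [hs.2]⟩
      have h2 : Real.sin s ≠ 0 := (Real.sin_pos_of_pos_of_lt_pi hs.1 (by linarith [hs.2])).ne'
      have h3 : ((p+2:ℕ):ℝ) ≠ 0 := by positivity
      field_simp)
    ((p+2:ℕ):ℝ) (by positivity)
    (by
      intro s hs
      have h1 : Real.cos s ≠ 0 := cos_ne s ⟨by linarith [hs.1], by linarith [hs.2]⟩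
      have h3 : (0:ℝ) < ((p+2:ℕ):ℝ) := by positivity
      have hs0 := hs.1
      rw [abs_div, abs_mul, abs_of_pos h3]
      have hc := Real.abs_cos_le_one s
      have hc0 : 0 < |Real.cos s| := abs_pos.2 h1
      set A := |Real.cos s ^ m - Real.exp (-Real.sin s ^ (p+2)) * Real.cos s|
      have hA : 0 ≤ A := abs_nonneg _
      have : A ≤ ((p+2:ℕ):ℝ) * (A / (((p+2:ℕ):ℝ) * |Real.cos s|)) := by
        rw [mul_div_mul_left _ _ h3.ne'.symm.symm |> fun h => (mul_div_assoc _ _ _).symm.trans h]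
        rw [le_div_iff₀ hc0]
        nlinarith
      refine this.trans ?_
      gcongr
      have : 0 ≤ s ^ 1 := by positivity
      linarith)
  refine vdcB' _ 1 p ?_ _ K hK
  push_cast
  rw [div_lt_div_iff₀ (by positivity) (by positivity)]
  linarith

lemma piece_near1 (β m : ℕ) (hβ : 3 ≤ β) :
    Tendsto (fun t : ℝ => ((t ^ (1 / (β:ℝ)) : ℝ) : ℂ) *
      ∫ s in (0:ℝ)..(Real.pi/4), ph t (Real.cos s ^ β) * ((Real.sin s ^ m : ℝ) : ℂ)) atTop (𝓝 0) := by
  obtain ⟨p, rfl⟩ : ∃ p, β = p + 1 := ⟨β - 1, by omega⟩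
  have hpi := Real.pi_pos
  obtain ⟨K, -, hK⟩ := vdcB (fun s => Real.cos s ^ (p+1))
    (fun s => ((p+1:ℕ):ℝ) * Real.cos s ^ p * (-Real.sin s))
    (fun s => Real.sin s ^ m)
    (fun s => - Real.sin s ^ m / (((p+1:ℕ):ℝ) * Real.cos s ^ p))
    1 0 1 rfl le_rfl (by omega)
    (fun s => (Real.hasDerivAt_cos s).pow (p+1))
    (by fun_prop) (by fun_prop)
    (by
      apply ContDiffOn.div
      · exact ContDiff.contDiffOn (by fun_prop)
      · exact ContDiff.contDiffOn (by fun_prop)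
      · intro s hs
        exact mul_ne_zero (by positivity) (pow_ne_zero _ (cos_ne s hs)))
    (by intro h; omega)
    (by
      intro s hs
      have h1 : Real.cos s ≠ 0 := cos_ne s ⟨by linarith [hs.1], by linarith [hs.2]⟩
      have h2 : Real.sin s ≠ 0 := (Real.sin_pos_of_pos_of_lt_pi hs.1 (by linarith [hs.2])).ne'
      have h3 : ((p+1:ℕ):ℝ) ≠ 0 := by positivity
      field_simp)
    1 (by positivity)
    (by
      intro s hs
      have : |Real.sin s ^ m| ≤ 1 := by
        rw [abs_pow]; exact pow_le_one₀ (abs_nonneg _) (Real.abs_sin_le_one s)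
      rw [pow_zero]
      linarith [abs_nonneg (- Real.sin s ^ m / (((p+1:ℕ):ℝ) * Real.cos s ^ p))])
  refine vdcB' _ 0 1 ?_ _ K hK
  have : (2:ℝ) ≤ p := by exact_mod_cast (by omega : 2 ≤ p)
  push_cast
  rw [div_lt_div_iff₀ (by positivity) (by positivity)]
  linarith

noncomputable def Jp (β m : ℕ) (t : ℝ) : ℂ :=
  ∫ s in (0:ℝ)..(Real.pi/2), ph t (Real.sin s ^ β) * ((Real.cos s ^ m : ℝ) : ℂ)

lemma Jp_lim (β m : ℕ) (hβ : 3 ≤ β) :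
    ∃ L : ℂ, 0 < L.re ∧ Tendsto (fun t : ℝ => ((t ^ (1 / (β:ℝ)) : ℝ) : ℂ) * Jp β m t) atTop (𝓝 L) := by
  have hpi := Real.pi_pos
  obtain ⟨L, hL, h⟩ := main_piece β hβ (Real.sin (Real.pi/4))
    (Real.sin_pos_of_pos_of_lt_pi (by positivity) (by linarith))
  refine ⟨L, hL, ?_⟩
  have h2 := (h.add (piece_near0 β m hβ)).add (piece_near1 β m hβ)
  simp only [add_zero] at h2
  refine h2.congr fun t => ?_
  rw [← mul_add, ← mul_add]
  congr 1
  have hc : ∀ g : ℝ → ℝ, Continuous g → Continuous (fun s => ph t (Real.sin s ^ β) * ((g s : ℝ) : ℂ)) :=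
    fun g hg => ((ph_cont t).comp (by fun_prop)).mul (Complex.continuous_ofReal.comp hg)
  have c1 := hc (fun s => Real.cos s ^ m) (by fun_prop)
  have c2 := hc (fun s => Real.exp (-Real.sin s ^ β) * Real.cos s) (by fun_prop)
  have c3 := hc (fun s => Real.cos s ^ m - Real.exp (-Real.sin s ^ β) * Real.cos s) (by fun_prop)
  have e1 : ∫ s in (0:ℝ)..(Real.sin (Real.pi/4)), ph t (s ^ β) * ((Real.exp (-s ^ β) : ℝ) : ℂ)
      = ∫ s in (0:ℝ)..(Real.pi/4), ph t (Real.sin s ^ β) * ((Real.exp (-Real.sin s ^ β) * Real.cos s : ℝ) : ℂ) := by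
    have := intervalIntegral.integral_deriv_smul_comp (a := 0) (b := Real.pi/4) (f := Real.sin) (f' := Real.cos)
      (g := fun s => ph t (s ^ β) * ((Real.exp (-s ^ β) : ℝ) : ℂ))
      (fun s _ => Real.hasDerivAt_sin s) Real.continuous_cos.continuousOn
      (((ph_cont t).comp (by fun_prop)).mul (Complex.continuous_ofReal.comp (by fun_prop)))
    rw [Real.sin_zero] at this
    rw [← this]
    congr 1; ext s
    simp only [Function.comp, Complex.real_smul]
    push_cast; ring
  have e2 : ∫ s in (0:ℝ)..(Real.pi/4), ph t (Real.cos s ^ β) * ((Real.sin s ^ m : ℝ) : ℂ)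
      = ∫ s in (Real.pi/4)..(Real.pi/2), ph t (Real.sin s ^ β) * ((Real.cos s ^ m : ℝ) : ℂ) := by
    have := intervalIntegral.integral_comp_sub_left (a := 0) (b := Real.pi/4)
      (fun s => ph t (Real.sin s ^ β) * ((Real.cos s ^ m : ℝ) : ℂ)) (Real.pi/2)
    simp only [Real.sin_pi_div_two_sub, Real.cos_pi_div_two_sub] at this
    rw [this]
    congr 1 <;> ring
  rw [e1, e2, ← intervalIntegral.integral_add (c2.intervalIntegrable _ _) (c3.intervalIntegrable _ _), Jp,
    ← intervalIntegral.integral_add_adjacent_intervals (c1.intervalIntegrable 0 (Real.pi/4)) (c1.intervalIntegrable _ _)]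
  congr 2
  ext s
  push_cast; ring

lemma J_lim (β m : ℕ) (hβ : 3 ≤ β) :
    ∃ a₀ : ℝ, 0 < a₀ ∧ Tendsto (fun t : ℝ => t ^ (1 / (β:ℝ)) *
      ‖∫ s in (-(Real.pi/2))..(Real.pi/2), ph t (Real.sin s ^ β) * ((Real.cos s ^ m : ℝ) : ℂ)‖) atTop (𝓝 a₀) := by
  obtain ⟨L, hL, h⟩ := Jp_lim β m hβ
  have hc : ∀ t, Continuous (fun s => ph t (Real.sin s ^ β) * ((Real.cos s ^ m : ℝ) : ℂ)) :=
    fun t => ((ph_cont t).comp (by fun_prop)).mul (Complex.continuous_ofReal.comp (by fun_prop))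
  have split : ∀ t, ∫ s in (-(Real.pi/2))..(Real.pi/2), ph t (Real.sin s ^ β) * ((Real.cos s ^ m : ℝ) : ℂ)
      = (∫ s in (0:ℝ)..(Real.pi/2), ph t ((-1) ^ β * Real.sin s ^ β) * ((Real.cos s ^ m : ℝ) : ℂ)) + Jp β m t := by
    intro t
    rw [← intervalIntegral.integral_add_adjacent_intervals ((hc t).intervalIntegrable _ 0) ((hc t).intervalIntegrable _ _), Jp]
    congr 1
    have := intervalIntegral.integral_comp_neg (a := 0) (b := Real.pi/2)
      (fun s => ph t (Real.sin s ^ β) * ((Real.cos s ^ m : ℝ) : ℂ))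
    rw [neg_zero] at this
    rw [← this]
    congr 1; ext s
    rw [Real.sin_neg, Real.cos_neg, neg_pow]
  have fin : ∀ (M : ℂ), 0 < M.re → (Tendsto (fun t : ℝ => ((t ^ (1 / (β:ℝ)) : ℝ) : ℂ) *
      ∫ s in (-(Real.pi/2))..(Real.pi/2), ph t (Real.sin s ^ β) * ((Real.cos s ^ m : ℝ) : ℂ)) atTop (𝓝 M)) →
      ∃ a₀ : ℝ, 0 < a₀ ∧ Tendsto (fun t : ℝ => t ^ (1 / (β:ℝ)) *
      ‖∫ s in (-(Real.pi/2))..(Real.pi/2), ph t (Real.sin s ^ β) * ((Real.cos s ^ m : ℝ) : ℂ)‖) atTop (𝓝 a₀) := by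
    intro M hM hT
    refine ⟨‖M‖, ?_, ?_⟩
    · rw [norm_pos_iff]; rintro rfl; simp at hM
    · refine hT.norm.congr' ?_
      filter_upwards [eventually_gt_atTop 0] with t ht
      rw [norm_mul, Complex.norm_real, Real.norm_of_nonneg (by positivity)]
  rcases Nat.even_or_odd β with he | ho
  · refine fin (L + L) (by simpa using hL) ?_
    refine (h.add h).congr fun t => ?_
    rw [split, he.neg_one_pow, ← mul_add]
    simp [Jp]
  · refine fin (starRingEnd ℂ L + L) (by simpa using hL) ?_
    have h' := (Complex.continuous_conj.tendsto _).comp h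
    refine (h'.add h).congr fun t => ?_
    rw [split, ho.neg_one_pow]
    simp only [Function.comp, map_mul, Complex.conj_ofReal]
    rw [← mul_add]
    congr 2
    rw [Jp, ← intervalIntegral.intervalIntegral_conj]
    congr 1; ext s
    rw [map_mul, Complex.conj_ofReal]
    congr 1
    unfold ph
    rw [← Complex.exp_conj, map_mul, Complex.conj_I, Complex.conj_ofReal]
    congr 1
    push_cast
    ring

section uniq
variable {E : Type*} [NormedAddCommGroup E] [InnerProductSpace ℝ E] [FiniteDimensional ℝ E]
  [MeasurableSpace E] [BorelSpace E]

lemma ball_const (μ : Measure E) (hμ : ∀ L : E ≃ₗᵢ[ℝ] E, μ.map L = μ) (x y : E) (h : ‖x‖ = ‖y‖) (r : ℝ) :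
    μ.real (Metric.ball x r) = μ.real (Metric.ball y r) := by
  set L : E ≃ₗᵢ[ℝ] E := (Submodule.reflection (ℝ ∙ (x - y))ᗮ)
  have hL : L x = y := Submodule.reflection_sub h
  have h1 : μ (Metric.ball y r) = μ (Metric.ball x r) := by
    conv_lhs => rw [← hμ L]
    rw [Measure.map_apply L.continuous.measurable measurableSet_ball]
    congr 1
    rw [LinearIsometryEquiv.preimage_ball, ← hL, LinearIsometryEquiv.symm_apply_apply]
  rw [Measure.real, Measure.real, h1]

lemma prod_int (μ ν : Measure E) [IsFiniteMeasure μ] [IsFiniteMeasure ν]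
    (hμS : ∀ᵐ x ∂μ, ‖x‖ = 1) (hν : ∀ L : E ≃ₗᵢ[ℝ] E, ν.map L = ν) (x0 : E) (hx0 : ‖x0‖ = 1)
    (f : E → ℂ) (cf : Continuous f) (bf : ∀ x, ‖f x‖ ≤ 1) (r : ℝ) :
    ∫ z in {z : E × E | dist z.1 z.2 < r}, f z.1 ∂(μ.prod ν) = (ν.real (Metric.ball x0 r) : ℂ) * ∫ x, f x ∂μ := by
  have mT : MeasurableSet {z : E × E | dist z.1 z.2 < r} := (isOpen_lt (by fun_prop) (by fun_prop)).measurableSet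
  rw [← integral_indicator mT, integral_prod, ← integral_const_mul]
  · apply integral_congr_ae
    filter_upwards [hμS] with x hx
    have : ∀ y, Set.indicator {z : E × E | dist z.1 z.2 < r} (fun z => f z.1) (x, y)
        = Set.indicator (Metric.ball x r) (fun _ => f x) y := by
      intro y
      simp only [Set.indicator, Set.mem_ofPred_eq, Metric.mem_ball, dist_comm]
    simp only [this]
    rw [integral_indicator measurableSet_ball, setIntegral_const, ball_const ν hν x0 x (by rw [hx, hx0]), Complex.real_smul]
  · apply Integrable.indicator _ mT
    refine Integrable.of_bound (cf.comp continuous_fst).aestronglyMeasurable 1 ?_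
    filter_upwards with z using bf _

lemma uniq (μ ν : Measure E) [IsFiniteMeasure μ] [IsFiniteMeasure ν]
    (hμS : ∀ᵐ x ∂μ, ‖x‖ = 1) (hνS : ∀ᵐ x ∂ν, ‖x‖ = 1)
    (hμ : ∀ L : E ≃ₗᵢ[ℝ] E, μ.map L = μ) (hν : ∀ L : E ≃ₗᵢ[ℝ] E, ν.map L = ν)
    (hμ0 : μ ≠ 0)
    (f : E → ℂ) (cf : Continuous f) (bf : ∀ x, ‖f x‖ ≤ 1) :
    (ν.real Set.univ : ℂ) * ∫ x, f x ∂μ = (μ.real Set.univ : ℂ) * ∫ x, f x ∂ν := by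
  have hS0 : μ (Metric.sphere 0 1) ≠ 0 := by
    intro h
    apply hμ0
    rw [← Measure.measure_univ_eq_zero]
    have : ∀ᵐ x ∂μ, False := by
      have h' : ∀ᵐ x ∂μ, x ∉ Metric.sphere (0:E) 1 := measure_eq_zero_iff_ae_notMem.1 h
      filter_upwards [hμS, h'] with x h1 h2
      exact h2 (by simpa using h1)
    simpa [ae_iff] using this
  obtain ⟨x0, hx0S, hx0⟩ := exists_mem_forall_mem_nhdsWithin_pos_measure hS0
  have hx0n : ‖x0‖ = 1 := by simpa using hx0S
  have M1 : 0 < μ.real Set.univ := by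
    rw [Measure.real, ENNReal.toReal_pos_iff]
    exact ⟨pos_iff_ne_zero.2 (by simpa using hμ0), measure_lt_top _ _⟩
  rw [← sub_eq_zero, ← norm_le_zero_iff]
  refine le_of_forall_pos_le_add fun ε hε => ?_
  rw [zero_add]
  have huc := (isCompact_sphere (0:E) 1).uniformContinuousOn_of_continuous cf.continuousOn
  obtain ⟨η, hη, hη'⟩ : ∃ η, 0 < η ∧ η * (ν.real Set.univ * μ.real Set.univ) ≤ ε := by
    refine ⟨ε / (ν.real Set.univ * μ.real Set.univ + 1), by positivity, ?_⟩
    rw [div_mul_eq_mul_div, div_le_iff₀ (by positivity)]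
    nlinarith
  rw [Metric.uniformContinuousOn_iff] at huc
  obtain ⟨r, hr, hfr⟩ := huc η hη
  have hG : 0 < μ.real (Metric.ball x0 r) := by
    rw [Measure.real, ENNReal.toReal_pos_iff]
    exact ⟨hx0 _ (mem_nhdsWithin_of_mem_nhds (Metric.ball_mem_nhds x0 hr)), measure_lt_top _ _⟩
  set G := μ.real (Metric.ball x0 r) with hGdef
  set H := ν.real (Metric.ball x0 r) with hHdef
  set T := {z : E × E | dist z.1 z.2 < r} with hT
  have mT : MeasurableSet T := (isOpen_lt (by fun_prop) (by fun_prop)).measurableSet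
  have sw : ∀ g : E → ℂ, ∫ z in T, g z.2 ∂(μ.prod ν) = ∫ z in T, g z.1 ∂(ν.prod μ) := by
    intro g
    rw [← integral_indicator mT, ← integral_indicator mT, ← integral_prod_swap]
    congr 1; ext z
    simp only [Set.indicator, hT, Set.mem_ofPred_eq, Prod.fst_swap, Prod.snd_swap, dist_comm]
  have A := prod_int μ ν hμS hν x0 hx0n f cf bf r
  have B := (sw f).trans (prod_int ν μ hνS hμ x0 hx0n f cf bf r)
  have A1 := prod_int μ ν hμS hν x0 hx0n (fun _ => 1) continuous_const (by simp) r
  have B1 := (sw fun _ => 1).trans (prod_int ν μ hνS hμ x0 hx0n (fun _ => 1) continuous_const (by simp) r)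
  have A2 : (μ.prod ν).real T = H * μ.real Set.univ := by
    have : (((μ.prod ν).real T : ℝ) : ℂ) = ((H * μ.real Set.univ : ℝ) : ℂ) := by simpa using A1
    exact_mod_cast this
  have B2 : (μ.prod ν).real T = G * ν.real Set.univ := by
    have : (((μ.prod ν).real T : ℝ) : ℂ) = ((G * ν.real Set.univ : ℝ) : ℂ) := by simpa using B1
    exact_mod_cast this
  have hi1 : Integrable (fun z : E × E => f z.1) (μ.prod ν) :=
    Integrable.of_bound (cf.comp continuous_fst).aestronglyMeasurable 1 (by filter_upwards with z using bf _)
  have hi2 : Integrable (fun z : E × E => f z.2) (μ.prod ν) :=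
    Integrable.of_bound (cf.comp continuous_snd).aestronglyMeasurable 1 (by filter_upwards with z using bf _)
  have D : ‖(H : ℂ) * ∫ x, f x ∂μ - (G : ℂ) * ∫ x, f x ∂ν‖ ≤ η * (G * ν.real Set.univ) := by
    rw [← B2, ← A, ← B, ← integral_sub hi1.integrableOn hi2.integrableOn]
    have := norm_setIntegral_le_of_norm_le_const_ae (μ := μ.prod ν) (s := T) (C := η) (f := fun z => f z.1 - f z.2)
      (measure_lt_top _ _) (by
        rw [ae_restrict_iff' mT]
        filter_upwards [Measure.quasiMeasurePreserving_fst.ae hμS, Measure.quasiMeasurePreserving_snd.ae hνS] with z h1 h2 hz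
        rw [← dist_eq_norm]
        exact (hfr z.1 (by simpa using h1) z.2 (by simpa using h2) hz).le)
    exact this
  have E1 : (G : ℂ) * ((ν.real Set.univ : ℂ) * ∫ x, f x ∂μ - (μ.real Set.univ : ℂ) * ∫ x, f x ∂ν)
      = (μ.real Set.univ : ℂ) * ((H : ℂ) * ∫ x, f x ∂μ - (G : ℂ) * ∫ x, f x ∂ν) := by
    have : (G : ℂ) * (ν.real Set.univ : ℂ) = (H : ℂ) * (μ.real Set.univ : ℂ) := by
      exact_mod_cast B2.symm.trans A2
    linear_combination (∫ x, f x ∂μ) * this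
  have E2 := congrArg norm E1
  rw [norm_mul, norm_mul, Complex.norm_real, Complex.norm_real, Real.norm_of_nonneg hG.le, Real.norm_of_nonneg M1.le] at E2
  have E3 : G * ‖(ν.real Set.univ : ℂ) * ∫ x, f x ∂μ - (μ.real Set.univ : ℂ) * ∫ x, f x ∂ν‖ ≤ G * ε := by
    rw [E2]
    calc _ ≤ μ.real Set.univ * (η * (G * ν.real Set.univ)) := by gcongr
      _ = G * (η * (ν.real Set.univ * μ.real Set.univ)) := by ring
      _ ≤ _ := by gcongr
  exact le_of_mul_le_mul_left E3 hG
end uniq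

section haus
variable {E : Type*} [NormedAddCommGroup E] [InnerProductSpace ℝ E] [FiniteDimensional ℝ E]
  [MeasurableSpace E] [BorelSpace E]

lemma half_fin (m : ℕ) (hE : Module.finrank ℝ E = m + 1) (v : E) (hv : ‖v‖ = 1) :
    μH[(m:ℝ)] {x : E | ‖x‖ = 1 ∧ inner ℝ v x ≤ 0} < ∞ := by
  have : Fact (Module.finrank ℝ E = m + 1) := ⟨hE⟩
  have hv0 : v ≠ 0 := by rintro rfl; simp at hv
  have hF : Module.finrank ℝ (ℝ ∙ v)ᗮ = m := Submodule.finrank_orthogonal_span_singleton hv0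
  set φ : (ℝ ∙ v)ᗮ → E := fun w => stereoInvFunAux v (w : E) with hφ
  have cφ : ContDiff ℝ 1 φ := contDiff_stereoInvFunAux.comp (ℝ ∙ v)ᗮ.subtypeL.contDiff
  obtain ⟨K, hK⟩ : ∃ K, LipschitzOnWith K φ (Metric.closedBall 0 2) := by
    have h1 : LocallyLipschitz φ := cφ.locallyLipschitz
    exact (h1.locallyLipschitzOn).exists_lipschitzOnWith_of_compact (isCompact_closedBall _ _)
  have sub : {x : E | ‖x‖ = 1 ∧ inner ℝ v x ≤ 0} ⊆ φ '' (Metric.closedBall 0 2) := by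
    rintro x ⟨hx1, hx2⟩
    have hxv : x ≠ v := by
      rintro rfl
      rw [real_inner_self_eq_norm_sq, hv] at hx2
      norm_num at hx2
    refine ⟨stereoToFun v x, ?_, ?_⟩
    · rw [mem_closedBall_zero_iff, stereoToFun_apply, norm_smul]
      have h1 : ‖(ℝ ∙ v)ᗮ.orthogonalProjectionOnto x‖ ≤ 1 := by
        rw [← hx1]; exact Submodule.norm_orthogonalProjectionOnto_apply_le _ _
      have h2 : ‖2 / ((1 : ℝ) - innerSL ℝ v x)‖ ≤ 2 := by
        rw [innerSL_apply_apply, Real.norm_of_nonneg (by apply div_nonneg <;> linarith), div_le_iff₀ (by linarith)]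
        linarith
      calc _ ≤ 2 * (1:ℝ) := by gcongr
        _ = 2 := by norm_num
    · have := stereo_left_inv hv (x := ⟨x, by simpa using hx1⟩) hxv
      exact congrArg Subtype.val this
  have fin : μH[(m:ℝ)] (Metric.closedBall (0 : (ℝ ∙ v)ᗮ) 2) < ∞ := by
    have : (m:ℝ) = (Module.finrank ℝ (ℝ ∙ v)ᗮ : ℝ) := by rw [hF]
    rw [this]
    exact (isCompact_closedBall _ _).measure_lt_top
  refine (measure_mono sub).trans_lt ((hK.hausdorffMeasure_image_le (Nat.cast_nonneg m)).trans_lt ?_)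
  exact ENNReal.mul_lt_top (by simp) fin

lemma sphere_fin (m : ℕ) (hE : Module.finrank ℝ E = m + 1) :
    μH[(m:ℝ)] (Metric.sphere (0:E) 1) < ∞ := by
  have : Nontrivial E := Module.nontrivial_of_finrank_pos (R := ℝ) (by omega)
  obtain ⟨v, hv⟩ := exists_norm_eq E (zero_le_one (α := ℝ))
  have sub : Metric.sphere (0:E) 1 ⊆ {x : E | ‖x‖ = 1 ∧ inner ℝ v x ≤ 0} ∪ {x : E | ‖x‖ = 1 ∧ inner ℝ (-v) x ≤ 0} := by
    intro x hx
    rw [mem_sphere_zero_iff_norm] at hx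
    rcases le_total (inner ℝ v x) 0 with h | h
    · exact Or.inl ⟨hx, h⟩
    · exact Or.inr ⟨hx, by rw [inner_neg_left]; linarith⟩
  refine (measure_mono sub).trans_lt ((measure_union_le _ _).trans_lt ?_)
  exact ENNReal.add_lt_top.2 ⟨half_fin m hE v hv, half_fin m hE (-v) (by simpa using hv)⟩

lemma sphere_pos (m : ℕ) (hE : Module.finrank ℝ E = m + 1) :
    0 < μH[(m:ℝ)] (Metric.sphere (0:E) 1) := by
  have : Nontrivial E := Module.nontrivial_of_finrank_pos (R := ℝ) (by omega)
  have : Fact (Module.finrank ℝ E = m + 1) := ⟨hE⟩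
  obtain ⟨v, hv⟩ := exists_norm_eq E (zero_le_one (α := ℝ))
  have hv0 : v ≠ 0 := by rintro rfl; simp at hv
  have hF : Module.finrank ℝ (ℝ ∙ v)ᗮ = m := Submodule.finrank_orthogonal_span_singleton hv0
  have h := (ℝ ∙ v)ᗮ.lipschitzWith_orthogonalProjectionOnto.hausdorffMeasure_image_le (Nat.cast_nonneg (α := ℝ) m) (Metric.sphere (0:E) 1)
  have sub : Metric.ball (0 : (ℝ ∙ v)ᗮ) 1 ⊆ (ℝ ∙ v)ᗮ.orthogonalProjectionOnto '' (Metric.sphere (0:E) 1) := by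
    intro w hw
    rw [mem_ball_zero_iff] at hw
    refine ⟨(w:E) + Real.sqrt (1 - ‖w‖^2) • v, ?_, ?_⟩
    · rw [mem_sphere_zero_iff_norm]
      have hvw : inner ℝ (w:E) v = 0 := Submodule.mem_orthogonal_singleton_iff_inner_left.mp w.2
      have : ‖(w:E) + Real.sqrt (1 - ‖w‖^2) • v‖ ^ 2 = 1 := by
        rw [norm_add_sq_real, inner_smul_right, hvw, norm_smul, hv, Real.norm_of_nonneg (Real.sqrt_nonneg _), mul_one,
          Real.sq_sqrt (by nlinarith [norm_nonneg w])]
        simp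
      exact (pow_eq_one_iff_of_nonneg (norm_nonneg _) two_ne_zero).1 this
    · rw [map_add, map_smul, Submodule.orthogonalProjectionOnto_orthogonalComplement_singleton_eq_zero v]
      simp
  have pos : 0 < μH[(m:ℝ)] (Metric.ball (0 : (ℝ ∙ v)ᗮ) 1) := by
    have : (m:ℝ) = (Module.finrank ℝ (ℝ ∙ v)ᗮ : ℝ) := by rw [hF]
    rw [this]
    exact Metric.measure_ball_pos _ _ one_pos
  have := pos.trans_le ((measure_mono sub).trans h)
  simpa using this

lemma sphere_meas_inv (d : ℝ) (L : E ≃ₗᵢ[ℝ] E) :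
    ((μH[d] : Measure E).restrict (Metric.sphere (0:E) 1)).map L = (μH[d] : Measure E).restrict (Metric.sphere (0:E) 1) := by
  have h := (L.toIsometryEquiv.measurePreserving_hausdorffMeasure d).restrict_preimage (s := Metric.sphere (0:E) 1) Metric.isClosed_sphere.measurableSet
  have e : L.toIsometryEquiv ⁻¹' (Metric.sphere (0:E) 1) = Metric.sphere (0:E) 1 := by
    ext x; simp
  rw [e] at h
  exact h.map_eq
end haus

section sphcalc

lemma scale_lint {V : Type*} [NormedAddCommGroup V] [NormedSpace ℝ V] [FiniteDimensional ℝ V]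
    [MeasurableSpace V] [BorelSpace V] (μ : Measure V) [μ.IsAddHaarMeasure] (r : ℝ) (hr : 0 < r)
    (G : V → ℝ≥0∞) (hG : Measurable G) :
    ∫⁻ x, G x ∂μ = ENNReal.ofReal (r ^ Module.finrank ℝ V) * ∫⁻ x, G (r • x) ∂μ := by
  have h1 : ∫⁻ x, G (r • x) ∂μ = ∫⁻ x, G x ∂(μ.map (r • ·)) :=
    (lintegral_map hG (measurable_const_smul r)).symm
  rw [h1, Measure.map_addHaar_smul μ hr.ne', lintegral_smul_measure, smul_eq_mul, ← mul_assoc,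
    ← ENNReal.ofReal_mul (by positivity), abs_of_pos (by positivity), mul_inv_cancel₀ (by positivity)]
  simp

/-- Radial cutoff. -/
noncomputable def cut (q : ℝ) : ℝ≥0∞ := Set.indicator (Set.Iio (1:ℝ)) (fun _ => 1) q

lemma cut_meas : Measurable cut := measurable_const.indicator measurableSet_Iio

/-- Sum of squares. -/
noncomputable def R2 {k : ℕ} (z : Fin k → ℝ) : ℝ := ∑ i, z i ^ 2

lemma R2_meas {k : ℕ} : Measurable (R2 (k := k)) := by unfold R2; fun_prop

lemma R2_smul {k : ℕ} (c : ℝ) (z : Fin k → ℝ) : R2 (c • z) = c ^ 2 * R2 z := by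
  simp [R2, Finset.mul_sum, mul_pow]

lemma R2_nonneg {k : ℕ} (z : Fin k → ℝ) : 0 ≤ R2 z := Finset.sum_nonneg fun i _ => sq_nonneg _

lemma R2_pos (k : ℕ) : ∀ᵐ z : Fin (k+1) → ℝ, 0 < R2 z := by
  have h : ∀ᵐ z : Fin (k+1) → ℝ, z ≠ 0 := by
    rw [ae_iff]; simp
  filter_upwards [h] with z hz
  refine lt_of_le_of_ne (R2_nonneg z) fun h0 => hz ?_
  ext i
  have := (Finset.sum_eq_zero_iff_of_nonneg (s := Finset.univ) (f := fun i => z i ^ 2) (fun i _ => sq_nonneg _)).1 h0.symm i (Finset.mem_univ _)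
  simpa using this

lemma step1 (k : ℕ) (N : Fin (k+2)) (F : ℝ → ℝ≥0∞) (hF : Measurable F) :
    ∫⁻ x : EuclideanSpace ℝ (Fin (k+2)), F (x N / ‖x‖) * cut (‖x‖^2) =
      ∫⁻ z : Fin (k+1) → ℝ, ∫⁻ s : ℝ, F (s / Real.sqrt (s^2 + R2 z)) * cut (s^2 + R2 z) := by
  set Φ : ℝ × (Fin (k+1) → ℝ) → ℝ≥0∞ := fun p => F (p.1 / Real.sqrt (p.1^2 + R2 p.2)) * cut (p.1^2 + R2 p.2) with hΦ
  have mq : Measurable fun p : ℝ × (Fin (k+1) → ℝ) => p.1^2 + R2 p.2 :=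
    (measurable_fst.pow_const 2).add (R2_meas.comp measurable_snd)
  have mΦ : Measurable Φ := (hF.comp (measurable_fst.div mq.sqrt)).mul (cut_meas.comp mq)
  have mp := (volume_preserving_piFinSuccAbove (fun _ : Fin (k+2) => ℝ) N).comp
    (PiLp.volume_preserving_ofLp (Fin (k+2)))
  have h2 : ∫⁻ p, Φ p = ∫⁻ z : Fin (k+1) → ℝ, ∫⁻ s : ℝ, Φ (s, z) := by
    rw [Measure.volume_eq_prod, lintegral_prod_symm _ mΦ.aemeasurable]
  rw [← h2, ← mp.lintegral_comp mΦ]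
  refine lintegral_congr fun x => ?_
  have hx : ‖x‖^2 = x N ^ 2 + R2 (fun i => x (N.succAbove i)) := by
    rw [EuclideanSpace.real_norm_sq_eq, Fin.sum_univ_succAbove _ N, R2]
  have hx' : ‖x‖ = Real.sqrt (x N ^ 2 + R2 (fun i => x (N.succAbove i))) := by
    rw [← hx, Real.sqrt_sq (norm_nonneg _)]
  rw [hx, hx']
  rfl

lemma step2 (r2 : ℝ) (hr : 0 < r2) (F : ℝ → ℝ≥0∞) (hF : Measurable F) :
    ∫⁻ s : ℝ, F (s / Real.sqrt (s^2 + r2)) * cut (s^2 + r2) =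
    ∫⁻ u : ℝ, F (u / Real.sqrt (1 + u^2)) * (ENNReal.ofReal (Real.sqrt r2) * cut (r2 * (1 + u^2))) := by
  have hs : 0 < Real.sqrt r2 := Real.sqrt_pos.2 hr
  have mq : Measurable fun s : ℝ => s^2 + r2 := by fun_prop
  have mm : Measurable fun s : ℝ => F (s / Real.sqrt (s^2 + r2)) * cut (s^2 + r2) :=
    (hF.comp (measurable_id.div mq.sqrt)).mul (cut_meas.comp mq)
  rw [scale_lint volume (Real.sqrt r2) hs _ mm, ← lintegral_const_mul' _ _ ENNReal.ofReal_ne_top]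
  refine lintegral_congr fun u => ?_
  have e : (Real.sqrt r2 • u)^2 + r2 = r2 * (1 + u^2) := by
    rw [smul_eq_mul, mul_pow, Real.sq_sqrt hr.le]; ring
  have e2 : Real.sqrt r2 • u / Real.sqrt (r2 * (1 + u^2)) = u / Real.sqrt (1 + u^2) := by
    rw [Real.sqrt_mul hr.le, smul_eq_mul, mul_div_mul_left _ _ hs.ne']
  rw [e, e2]
  simp only [Module.finrank_self, pow_one]
  ring

/-- Normalizing constant. -/
noncomputable def CC (k : ℕ) : ℝ≥0∞ := ∫⁻ z : Fin (k+1) → ℝ, ENNReal.ofReal (Real.sqrt (R2 z)) * cut (R2 z)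

lemma step3 (k : ℕ) (c : ℝ) (hc : 0 < c) :
    ∫⁻ z : Fin (k+1) → ℝ, ENNReal.ofReal (Real.sqrt (R2 z)) * cut (R2 z * (c⁻¹)^2)
      = ENNReal.ofReal (c ^ (k+2)) * CC k := by
  rw [scale_lint volume c hc, CC]
  · rw [← lintegral_const_mul' _ _ ENNReal.ofReal_ne_top, ← lintegral_const_mul' _ _ ENNReal.ofReal_ne_top]
    refine lintegral_congr fun z => ?_
    rw [R2_smul, Real.sqrt_mul (by positivity), Real.sqrt_sq hc.le, ENNReal.ofReal_mul hc.le, ← mul_assoc, ← mul_assoc,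
      ← ENNReal.ofReal_mul (by positivity), ← mul_assoc]
    have : c ^ 2 * R2 z * c⁻¹ ^ 2 = R2 z := by field_simp
    rw [this]
    simp [pow_succ]
  · exact (R2_meas.sqrt.ennreal_ofReal).mul (cut_meas.comp (R2_meas.mul_const _))

lemma step4 (k : ℕ) (N : Fin (k+2)) (F : ℝ → ℝ≥0∞) (hF : Measurable F) :
    ∫⁻ x : EuclideanSpace ℝ (Fin (k+2)), F (x N / ‖x‖) * cut (‖x‖^2) =
      ∫⁻ u : ℝ, F (u / Real.sqrt (1 + u^2)) * (ENNReal.ofReal ((Real.sqrt (1 + u^2))⁻¹ ^ (k+2)) * CC k) := by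
  rw [step1 k N F hF]
  have h : ∀ᵐ z : Fin (k+1) → ℝ, ∫⁻ s : ℝ, F (s / Real.sqrt (s^2 + R2 z)) * cut (s^2 + R2 z) =
      ∫⁻ u : ℝ, F (u / Real.sqrt (1 + u^2)) * (ENNReal.ofReal (Real.sqrt (R2 z)) * cut (R2 z * (1 + u^2))) := by
    filter_upwards [R2_pos k] with z hz using step2 _ hz F hF
  have m1 : Measurable fun u : ℝ => F (u / Real.sqrt (1 + u^2)) := hF.comp (by fun_prop)
  rw [lintegral_congr_ae h, lintegral_lintegral_swap]
  · refine lintegral_congr fun u => ?_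
    have hp : 0 < Real.sqrt (1 + u^2) := Real.sqrt_pos.2 (by positivity)
    rw [lintegral_const_mul, ← step3 k _ (inv_pos.2 hp), inv_inv, Real.sq_sqrt (by positivity)]
    exact (R2_meas.sqrt.ennreal_ofReal).mul (cut_meas.comp (R2_meas.mul_const _))
  · apply Measurable.aemeasurable
    have a1 : Measurable fun p : (Fin (k+1) → ℝ) × ℝ => R2 p.1 := R2_meas.comp measurable_fst
    have a2 : Measurable fun p : (Fin (k+1) → ℝ) × ℝ => 1 + p.2^2 := by fun_prop
    exact (m1.comp measurable_snd).mul (a1.sqrt.ennreal_ofReal.mul (cut_meas.comp (a1.mul a2)))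

lemma step5 (k : ℕ) (N : Fin (k+2)) (F : ℝ → ℝ≥0∞) (hF : Measurable F) :
    ∫⁻ x : EuclideanSpace ℝ (Fin (k+2)), F (x N / ‖x‖) * cut (‖x‖^2) =
      CC k * ∫⁻ θ in Set.Ioo (-(Real.pi/2)) (Real.pi/2), ENNReal.ofReal (Real.cos θ ^ k) * F (Real.sin θ) := by
  rw [step4 k N F hF, ← setLIntegral_univ, ← Real.image_tan_Ioo,
    lintegral_image_eq_lintegral_abs_deriv_mul measurableSet_Ioo
      (f' := fun x => 1 / Real.cos x ^ 2)
      (fun x hx => (Real.hasDerivAt_tan (Real.cos_pos_of_mem_Ioo hx).ne').hasDerivWithinAt)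
      Real.injOn_tan,
    ← lintegral_const_mul _ (by fun_prop)]
  refine setLIntegral_congr_fun measurableSet_Ioo fun θ hθ => ?_
  have hc := Real.cos_pos_of_mem_Ioo hθ
  have e : Real.sqrt (1 + Real.tan θ ^ 2) = (Real.cos θ)⁻¹ := by
    rw [← Real.inv_sqrt_one_add_tan_sq hc, inv_inv]
  have e2 : Real.tan θ / (Real.cos θ)⁻¹ = Real.sin θ := by
    rw [Real.tan_eq_sin_div_cos]; field_simp
  rw [e, e2, inv_inv, abs_of_pos (by positivity)]
  have e3 : ENNReal.ofReal (Real.cos θ ^ k) = ENNReal.ofReal (1 / Real.cos θ ^ 2) * ENNReal.ofReal (Real.cos θ ^ (k+2)) := by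
    rw [← ENNReal.ofReal_mul (by positivity)]
    congr 1; field_simp; ring
  rw [e3]; ring
end sphcalc

section nu

/-- Radial projection of Lebesgue measure on the unit ball. -/
noncomputable def nu (k : ℕ) : Measure (EuclideanSpace ℝ (Fin (k+2))) :=
  ((volume : Measure (EuclideanSpace ℝ (Fin (k+2)))).restrict (Metric.ball 0 1)).map (fun x => ‖x‖⁻¹ • x)

lemma rad_meas (k : ℕ) : Measurable (fun x : EuclideanSpace ℝ (Fin (k+2)) => ‖x‖⁻¹ • x) :=
  measurable_norm.inv.smul measurable_id

instance nu_fin (k : ℕ) : IsFiniteMeasure (nu k) := by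
  have : IsFiniteMeasure ((volume : Measure (EuclideanSpace ℝ (Fin (k+2)))).restrict (Metric.ball 0 1)) :=
    ⟨by rw [Measure.restrict_apply_univ]; exact measure_ball_lt_top⟩
  unfold nu; infer_instance

lemma nu_univ (k : ℕ) : 0 < nu k Set.univ := by
  rw [nu, Measure.map_apply (rad_meas k) MeasurableSet.univ, Set.preimage_univ, Measure.restrict_apply_univ]
  exact Metric.measure_ball_pos _ _ one_pos

lemma nu_norm (k : ℕ) : ∀ᵐ y ∂(nu k), ‖y‖ = 1 := by
  rw [nu, ae_map_iff (rad_meas k).aemeasurable (measurableSet_eq_fun measurable_norm measurable_const)]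
  apply ae_restrict_of_ae
  have h : ∀ᵐ x : EuclideanSpace ℝ (Fin (k+2)), x ≠ 0 := by
    rw [ae_iff]; simp
  filter_upwards [h] with x hx
  rw [norm_smul, norm_inv, norm_norm, inv_mul_cancel₀ (norm_ne_zero_iff.2 hx)]

lemma nu_inv (k : ℕ) (L : EuclideanSpace ℝ (Fin (k+2)) ≃ₗᵢ[ℝ] EuclideanSpace ℝ (Fin (k+2))) :
    (nu k).map L = nu k := by
  have h := L.measurePreserving.restrict_preimage (s := Metric.ball (0 : EuclideanSpace ℝ (Fin (k+2))) 1) measurableSet_ball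
  have e : L ⁻¹' (Metric.ball (0 : EuclideanSpace ℝ (Fin (k+2))) 1) = Metric.ball 0 1 := by
    ext x; simp
  rw [e] at h
  rw [nu, Measure.map_map L.continuous.measurable (rad_meas k)]
  conv_rhs => rw [← h.map_eq]
  rw [Measure.map_map (rad_meas k) L.continuous.measurable]
  congr 1
  ext1 x
  simp

/-- Weighted measure on the angle. -/
noncomputable def ang (k : ℕ) : Measure ℝ :=
  ((volume : Measure ℝ).restrict (Set.Ioo (-(Real.pi/2)) (Real.pi/2))).withDensity (fun θ => ENNReal.ofReal (Real.cos θ ^ k))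

lemma nu_map (k : ℕ) (N : Fin (k+2)) :
    (nu k).map (fun y => y N) = CC k • (ang k).map Real.sin := by
  have mN : Measurable (fun y : EuclideanSpace ℝ (Fin (k+2)) => y N) := by fun_prop
  refine Measure.ext_of_lintegral _ fun (F : ℝ → ℝ≥0∞) hF => ?_
  have hFN : Measurable (fun y : EuclideanSpace ℝ (Fin (k+2)) => F (y N)) := hF.comp mN
  have hFs : Measurable (fun θ => F (Real.sin θ)) := hF.comp Real.measurable_sin
  rw [lintegral_map hF mN, nu, lintegral_map hFN (rad_meas k), lintegral_smul_measure,
    lintegral_map hF Real.measurable_sin, ang, lintegral_withDensity_eq_lintegral_mul _ (by fun_prop) hFs, smul_eq_mul]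
  simp only [Pi.mul_apply, Function.comp]
  rw [← step5 k N F hF, ← lintegral_indicator measurableSet_ball]
  refine lintegral_congr fun x => ?_
  have : ‖x‖^2 < 1 ↔ ‖x‖ < 1 := by
    constructor <;> intro h <;> nlinarith [norm_nonneg x]
  by_cases hx : ‖x‖ < 1
  · rw [Set.indicator_of_mem (by simpa using hx), cut, Set.indicator_of_mem (Set.mem_Iio.2 (this.2 hx))]
    simp [div_eq_inv_mul]
  · rw [Set.indicator_of_notMem (by simpa using hx), cut, Set.indicator_of_notMem (fun h => hx (this.1 (Set.mem_Iio.1 h)))]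
    simp

lemma ang_univ (k : ℕ) : 0 < ang k Set.univ := by
  rw [ang, withDensity_apply _ MeasurableSet.univ, Measure.restrict_univ, setLIntegral_pos_iff (by fun_prop)]
  have : Function.support (fun θ => ENNReal.ofReal (Real.cos θ ^ k)) ∩ Set.Ioo (-(Real.pi/2)) (Real.pi/2) = Set.Ioo (-(Real.pi/2)) (Real.pi/2) := by
    apply Set.inter_eq_right.2
    intro θ hθ
    have := Real.cos_pos_of_mem_Ioo hθ
    simp only [Function.mem_support, ne_eq, ENNReal.ofReal_eq_zero, not_le]
    positivity
  rw [this, Real.volume_Ioo]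
  simp [Real.pi_pos]

lemma CC_ne (k : ℕ) : 0 < (CC k).toReal := by
  have h := congrArg (fun μ : Measure ℝ => μ Set.univ) (nu_map k 0)
  simp only [Measure.smul_apply, smul_eq_mul] at h
  rw [Measure.map_apply (by fun_prop) MeasurableSet.univ, Measure.map_apply Real.measurable_sin MeasurableSet.univ] at h
  simp only [Set.preimage_univ] at h
  rw [ENNReal.toReal_pos_iff]
  constructor
  · rw [pos_iff_ne_zero]
    intro h0
    rw [h0, zero_mul] at h
    exact (nu_univ k).ne' h
  · rw [lt_top_iff_ne_top]
    intro h0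
    rw [h0, ENNReal.top_mul (ang_univ k).ne'] at h
    exact measure_ne_top _ _ h

lemma nu_int (k : ℕ) (N : Fin (k+2)) (f : ℝ → ℂ) (cf : Continuous f) :
    ∫ y, f (y N) ∂(nu k) = ((CC k).toReal : ℂ) *
      ∫ θ in (-(Real.pi/2))..(Real.pi/2), f (Real.sin θ) * ((Real.cos θ ^ k : ℝ) : ℂ) := by
  have mN : Measurable (fun y : EuclideanSpace ℝ (Fin (k+2)) => y N) := by fun_prop
  rw [← integral_map (f := f) mN.aemeasurable cf.aestronglyMeasurable, nu_map, integral_smul_measure,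
    integral_map Real.measurable_sin.aemeasurable cf.aestronglyMeasurable, Complex.real_smul]
  congr 1
  rw [intervalIntegral.integral_of_le (by linarith [Real.pi_pos]), integral_Ioc_eq_integral_Ioo, ang,
    integral_withDensity_eq_integral_toReal_smul (by fun_prop) (by filter_upwards with x using ENNReal.ofReal_lt_top)]
  refine setIntegral_congr_fun measurableSet_Ioo fun θ hθ => ?_
  have := Real.cos_pos_of_mem_Ioo hθ
  simp only [Complex.real_smul]
  rw [ENNReal.toReal_ofReal (by positivity), mul_comm]
end nu

theorem sphere_oscillatory_decay_optimal (n : ℕ) (hn : 2 ≤ n) (β : Fin n → ℕ)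
    (hβ : ∀ j, 3 ≤ β j) (N : Fin n) (hN : (N : ℕ) = n - 1)
    (hβmax : ∀ j, β j ≤ β N) :
    ∃ a₀ : ℝ, 0 < a₀ ∧
      Tendsto (fun t : ℝ =>
          t ^ ((1 : ℝ) / (β N : ℝ)) *
            ‖∫ y in Metric.sphere (0 : EuclideanSpace ℝ (Fin n)) 1,
                Complex.exp (Complex.I * Complex.ofReal (t * (y N) ^ (β N)))
                  ∂(μH[(n : ℝ) - 1])‖)
        atTop (𝓝 a₀) := by
  obtain ⟨k, rfl⟩ : ∃ k, n = k + 2 := ⟨n - 2, by omega⟩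
  have hd : (((k + 2 : ℕ) : ℝ) - 1) = ((k + 1 : ℕ) : ℝ) := by push_cast; ring
  rw [hd]
  have hE : Module.finrank ℝ (EuclideanSpace ℝ (Fin (k+2))) = (k + 1) + 1 := by simp
  set μ : Measure (EuclideanSpace ℝ (Fin (k+2))) := (μH[((k+1 : ℕ) : ℝ)]).restrict (Metric.sphere 0 1) with hμ
  have fμ : IsFiniteMeasure μ := ⟨by rw [hμ, Measure.restrict_apply_univ]; exact sphere_fin _ hE⟩
  have pμ : 0 < μ Set.univ := by rw [hμ, Measure.restrict_apply_univ]; exact sphere_pos _ hE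
  have hM : 0 < μ.real Set.univ := ENNReal.toReal_pos pμ.ne' (measure_ne_top _ _)
  have hV : 0 < (nu k).real Set.univ := ENNReal.toReal_pos (nu_univ k).ne' (measure_ne_top _ _)
  have nμ : ∀ᵐ x ∂μ, ‖x‖ = 1 := by
    filter_upwards [ae_restrict_mem (Metric.isClosed_sphere.measurableSet)] with x hx
    simpa using hx
  obtain ⟨a, ha, hlim⟩ := J_lim (β N) k (hβ N)
  have key : ∀ t : ℝ, ∫ y, ph t (y N ^ β N) ∂μ = ((μ.real Set.univ * (CC k).toReal / (nu k).real Set.univ : ℝ) : ℂ) *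
      ∫ s in (-(Real.pi/2))..(Real.pi/2), ph t (Real.sin s ^ β N) * ((Real.cos s ^ k : ℝ) : ℂ) := by
    intro t
    have cf : Continuous fun s : ℝ => ph t (s ^ β N) := by unfold ph; fun_prop
    have h := uniq μ (nu k) nμ (nu_norm k) (sphere_meas_inv _) (nu_inv k)
      (fun h0 => by rw [h0] at pμ; simp at pμ) (fun y => ph t (y N ^ β N))
      (cf.comp (by fun_prop : Continuous fun y : EuclideanSpace ℝ (Fin (k+2)) => y N)) (fun y => (ph_norm _ _).le)
    rw [nu_int k N (fun s => ph t (s ^ β N)) cf] at h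
    have hV' : ((nu k).real Set.univ : ℂ) ≠ 0 := by exact_mod_cast hV.ne'
    push_cast
    rw [div_mul_eq_mul_div, eq_div_iff hV', mul_comm, h]
    push_cast
    ring
  refine ⟨(μ.real Set.univ * (CC k).toReal / (nu k).real Set.univ) * a, by have := CC_ne k; positivity, ?_⟩
  refine (hlim.const_mul _).congr fun t => ?_
  have e : ∫ y, Complex.exp (Complex.I * Complex.ofReal (t * (y N) ^ (β N))) ∂μ = ∫ y, ph t (y N ^ β N) ∂μ := rfl
  rw [e, key t, norm_mul, Complex.norm_real, Real.norm_of_nonneg (by positivity)]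
  ring
end

section
/- Let $n \geq 2$, let $\alpha_1,\dots,\alpha_n$ be integers with $\alpha_j \geq 3$, set $\alpha_{\max} = \max\{\alpha_1,\dots,\alpha_n\}$, let $m \geq 3$ be an integer, and let $\gamma \geq \alpha_{\max}$. Then there is a constant $C$ such that for all $y, z \in \mathbb{R}^n$ with $\|y\|_m^m \neq \|z\|_m^m$, $\left| \int_{\mathbb{S}^{n-1}} e^{i\left[x_1^{\alpha_1}(y_1^m - z_1^m) + \cdots + x_n^{\alpha_n}(y_n^m - z_n^m)\right]} d\sigma(x) \right| \leq C \left| \|y\|_m^m - \|z\|_m^m \right|^{-1/\gamma}$. -/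
open MeasureTheory
open scoped ENNReal

lemma aux_iter (φ : ℝ → ℝ) (hφ : ContDiff ℝ ⊤ φ) (k : ℕ) (t : ℝ) :
    HasDerivAt (iteratedDeriv k φ) (iteratedDeriv (k + 1) φ t) t := by
  rw [iteratedDeriv_succ]
  exact (hφ.differentiable_iteratedDeriv k (by simp)).differentiableAt.hasDerivAt

lemma aux_parts (φ : ℝ → ℝ) (hφ : ContDiff ℝ ⊤ φ) (a b δ : ℝ) (hab : a ≤ b) (hδ : 0 < δ)
    (h : ∀ t ∈ Set.Icc a b, δ ≤ |iteratedDeriv 1 φ t|) :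
    ‖∫ t in a..b, Complex.exp (Complex.I * (φ t : ℂ))‖ ≤
      2 / δ + ∫ t in a..b, |iteratedDeriv 2 φ t| / (iteratedDeriv 1 φ t) ^ 2 := by
  have d0 : ∀ t, HasDerivAt φ (iteratedDeriv 1 φ t) t := fun t => by
    simpa using aux_iter φ hφ 0 t
  have d1 : ∀ t, HasDerivAt (iteratedDeriv 1 φ) (iteratedDeriv 2 φ t) t := aux_iter φ hφ 1
  have c0 : Continuous φ := hφ.continuous
  have c1 : Continuous (iteratedDeriv 1 φ) := hφ.continuous_iteratedDeriv 1 (by simp)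
  have c2 : Continuous (iteratedDeriv 2 φ) := hφ.continuous_iteratedDeriv 2 (by simp)
  have hne : ∀ t ∈ Set.Icc a b, iteratedDeriv 1 φ t ≠ 0 := fun t ht h0 => by
    have := h t ht
    rw [h0, abs_zero] at this; linarith
  set E : ℝ → ℂ := fun t => Complex.exp (Complex.I * (φ t : ℂ)) with hE
  have hEn : ∀ t, ‖E t‖ = 1 := fun t => by
    simp only [hE]; rw [mul_comm]; exact Complex.norm_exp_ofReal_mul_I _
  set R : ℝ → ℂ := fun t => E t * ((iteratedDeriv 2 φ t : ℝ) : ℂ) / (Complex.I * ((iteratedDeriv 1 φ t : ℝ) : ℂ) ^ 2) with hR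
  have cE : Continuous E := by fun_prop
  have cR : ContinuousOn R (Set.uIcc a b) := by
    rw [Set.uIcc_of_le hab]
    refine ContinuousOn.div (by fun_prop) (by fun_prop) fun t ht => ?_
    have : ((iteratedDeriv 1 φ t : ℝ) : ℂ) ≠ 0 := by exact_mod_cast hne t ht
    exact mul_ne_zero Complex.I_ne_zero (pow_ne_zero 2 this)
  have der : ∀ t ∈ Set.uIcc a b, HasDerivAt (fun t => E t / (Complex.I * ((iteratedDeriv 1 φ t : ℝ) : ℂ)))
      (E t - R t) t := by
    intro t ht
    rw [Set.uIcc_of_le hab] at ht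
    have h0 : ((iteratedDeriv 1 φ t : ℝ) : ℂ) ≠ 0 := by exact_mod_cast hne t ht
    have e1 : HasDerivAt E (E t * (Complex.I * ((iteratedDeriv 1 φ t : ℝ) : ℂ))) t :=
      ((d0 t).ofReal_comp.const_mul Complex.I).cexp
    have e2 := (d1 t).ofReal_comp.const_mul Complex.I
    have e3 := e1.div e2 (mul_ne_zero Complex.I_ne_zero h0)
    refine e3.congr_deriv ?_
    simp only [hR]
    have := Complex.I_ne_zero
    field_simp
  have iE : IntervalIntegrable E volume a b := cE.intervalIntegrable _ _
  have iR : IntervalIntegrable R volume a b := cR.intervalIntegrable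
  have ftc := intervalIntegral.integral_eq_sub_of_hasDerivAt der (iE.sub iR)
  rw [intervalIntegral.integral_sub iE iR] at ftc
  have hb : ∀ t ∈ Set.Icc a b, ‖E t / (Complex.I * ((iteratedDeriv 1 φ t : ℝ) : ℂ))‖ ≤ 1 / δ := by
    intro t ht
    rw [norm_div, hEn, norm_mul, Complex.norm_I, one_mul, Complex.norm_real, Real.norm_eq_abs]
    exact one_div_le_one_div_of_le hδ (h t ht)
  have hRb : ‖∫ t in a..b, R t‖ ≤ ∫ t in a..b, |iteratedDeriv 2 φ t| / (iteratedDeriv 1 φ t) ^ 2 := by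
    refine (intervalIntegral.norm_integral_le_integral_norm hab).trans (le_of_eq ?_)
    congr 1; ext t
    simp [hR, hEn]
  have : ∫ t in a..b, E t = (E b / (Complex.I * ((iteratedDeriv 1 φ b : ℝ) : ℂ)) - E a / (Complex.I * ((iteratedDeriv 1 φ a : ℝ) : ℂ))) + ∫ t in a..b, R t := by
    rw [← ftc]; ring
  rw [this]
  refine (norm_add_le _ _).trans (add_le_add ((norm_sub_le _ _).trans ?_) hRb)
  have := hb b ⟨hab, le_rfl⟩
  have := hb a ⟨le_rfl, hab⟩
  calc _ ≤ 1 / δ + 1 / δ := by linarith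
    _ = 2 / δ := by ring

lemma aux_base1 (φ : ℝ → ℝ) (hφ : ContDiff ℝ ⊤ φ) (a b δ : ℝ) (hab : a ≤ b) (hδ : 0 < δ)
    (h : ∀ t ∈ Set.Icc a b, δ ≤ |iteratedDeriv 1 φ t|)
    (hs : (∀ t ∈ Set.Icc a b, 0 ≤ iteratedDeriv 2 φ t) ∨ (∀ t ∈ Set.Icc a b, iteratedDeriv 2 φ t ≤ 0)) :
    ‖∫ t in a..b, Complex.exp (Complex.I * (φ t : ℂ))‖ ≤ 4 / δ := by
  refine (aux_parts φ hφ a b δ hab hδ h).trans ?_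
  have d1 : ∀ t, HasDerivAt (iteratedDeriv 1 φ) (iteratedDeriv 2 φ t) t := aux_iter φ hφ 1
  have c1 : Continuous (iteratedDeriv 1 φ) := hφ.continuous_iteratedDeriv 1 (by simp)
  have c2 : Continuous (iteratedDeriv 2 φ) := hφ.continuous_iteratedDeriv 2 (by simp)
  have hne : ∀ t ∈ Set.Icc a b, iteratedDeriv 1 φ t ≠ 0 := fun t ht h0 => by
    have := h t ht
    rw [h0, abs_zero] at this; linarith
  have der : ∀ t ∈ Set.uIcc a b, HasDerivAt (fun t => (iteratedDeriv 1 φ t)⁻¹)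
      (-iteratedDeriv 2 φ t / (iteratedDeriv 1 φ t) ^ 2) t := by
    intro t ht
    rw [Set.uIcc_of_le hab] at ht
    exact (d1 t).inv (hne t ht)
  have ftc := intervalIntegral.integral_eq_sub_of_hasDerivAt der (by
    apply ContinuousOn.intervalIntegrable
    rw [Set.uIcc_of_le hab]
    refine ContinuousOn.div (by fun_prop) (by fun_prop) fun t ht => ?_
    exact pow_ne_zero 2 (hne t ht))
  have hb : ∀ t ∈ Set.Icc a b, |(iteratedDeriv 1 φ t)⁻¹| ≤ 1 / δ := by
    intro t ht
    rw [abs_inv, ← one_div]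
    exact one_div_le_one_div_of_le hδ (h t ht)
  have e : ∫ t in a..b, |iteratedDeriv 2 φ t| / (iteratedDeriv 1 φ t) ^ 2 ≤
      |∫ t in a..b, -iteratedDeriv 2 φ t / (iteratedDeriv 1 φ t) ^ 2| := by
    rcases hs with hs | hs
    · rw [← abs_neg, ← intervalIntegral.integral_neg]
      refine le_trans (le_of_eq ?_) (le_abs_self _)
      refine intervalIntegral.integral_congr fun t ht => ?_
      rw [Set.uIcc_of_le hab] at ht
      simp only [abs_of_nonneg (hs t ht)]; ring
    · refine le_trans (le_of_eq ?_) (le_abs_self _)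
      refine intervalIntegral.integral_congr fun t ht => ?_
      rw [Set.uIcc_of_le hab] at ht
      simp only [abs_of_nonpos (hs t ht)]
  rw [ftc] at e
  have h1 := hb b ⟨hab, le_rfl⟩
  have h2 := hb a ⟨le_rfl, hab⟩
  have := abs_sub (iteratedDeriv 1 φ b)⁻¹ (iteratedDeriv 1 φ a)⁻¹
  calc _ ≤ 2 / δ + (1 / δ + 1 / δ) := by linarith
    _ = 4 / δ := by ring

lemma aux_base2 (φ : ℝ → ℝ) (hφ : ContDiff ℝ ⊤ φ) (a b δ N : ℝ) (hab : a ≤ b) (hδ : 0 < δ)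
    (h : ∀ t ∈ Set.Icc a b, δ ≤ |iteratedDeriv 1 φ t|)
    (hs : ∀ t ∈ Set.Icc a b, |iteratedDeriv 2 φ t| ≤ N) :
    ‖∫ t in a..b, Complex.exp (Complex.I * (φ t : ℂ))‖ ≤ 2 / δ + N / δ ^ 2 * (b - a) := by
  refine (aux_parts φ hφ a b δ hab hδ h).trans ?_
  gcongr
  have := intervalIntegral.norm_integral_le_of_norm_le_const (a := a) (b := b) (C := N / δ ^ 2)
    (f := fun t => |iteratedDeriv 2 φ t| / (iteratedDeriv 1 φ t) ^ 2) (by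
      intro t ht
      rw [Set.uIoc_of_le hab] at ht
      have ht' : t ∈ Set.Icc a b := ⟨ht.1.le, ht.2⟩
      have h1 := h t ht'
      have h2 := hs t ht'
      rw [Real.norm_of_nonneg (by positivity), ← sq_abs (iteratedDeriv 1 φ t)]
      have : 0 ≤ N := (abs_nonneg _).trans h2
      gcongr)
  rw [abs_of_nonneg (by linarith)] at this
  exact (le_abs_self _).trans this

lemma aux_t0 (g : ℝ → ℝ) (hg : ContDiff ℝ 1 g) (a b l : ℝ) (hab : a ≤ b) (hl : 0 < l)
    (h : ∀ t ∈ Set.Icc a b, l ≤ |deriv g t|) :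
    ((∀ t ∈ Set.Icc a b, 0 ≤ deriv g t) ∨ (∀ t ∈ Set.Icc a b, deriv g t ≤ 0)) ∧
    ∃ t0 ∈ Set.Icc a b, ∀ t ∈ Set.Icc a b, l * |t - t0| ≤ |g t| := by
  have hc : Continuous (deriv g) := hg.continuous_deriv le_rfl
  have hd : Differentiable ℝ g := hg.differentiable (by simp)
  have key : ∀ f : ℝ → ℝ, Differentiable ℝ f → (∀ t ∈ Set.Icc a b, l ≤ deriv f t) →
      ∃ t0 ∈ Set.Icc a b, ∀ t ∈ Set.Icc a b, l * |t - t0| ≤ |f t| := by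
    intro f hf hf'
    have mono : ∀ s ∈ Set.Icc a b, ∀ t ∈ Set.Icc a b, s ≤ t → l * (t - s) ≤ f t - f s := by
      intro s hs t ht hst
      refine (convex_Icc a b).mul_sub_le_image_sub_of_le_deriv hf.continuous.continuousOn
        hf.differentiableOn (fun x hx => hf' x (interior_subset hx)) s hs t ht hst
    have ha : a ∈ Set.Icc a b := ⟨le_rfl, hab⟩
    have hb : b ∈ Set.Icc a b := ⟨hab, le_rfl⟩
    rcases le_or_gt 0 (f a) with h0 | h0
    · refine ⟨a, ha, fun t ht => ?_⟩
      have := mono a ha t ht ht.1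
      rw [abs_of_nonneg (by linarith [ht.1] : 0 ≤ t - a)]
      exact le_trans (by linarith) (le_abs_self _)
    rcases le_or_gt (f b) 0 with h1 | h1
    · refine ⟨b, hb, fun t ht => ?_⟩
      have := mono t ht b hb ht.2
      rw [abs_of_nonpos (by linarith [ht.2] : t - b ≤ 0)]
      exact le_trans (by linarith) (neg_le_abs _)
    obtain ⟨t0, ht0, hz⟩ := intermediate_value_Icc hab hf.continuous.continuousOn
      (show (0:ℝ) ∈ Set.Icc (f a) (f b) from ⟨h0.le, h1.le⟩)
    refine ⟨t0, ht0, fun t ht => ?_⟩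
    rcases le_total t0 t with h2 | h2
    · have := mono t0 ht0 t ht h2
      rw [abs_of_nonneg (by linarith)]
      exact le_trans (by linarith) (le_abs_self _)
    · have := mono t ht t0 ht0 h2
      rw [abs_of_nonpos (by linarith)]
      exact le_trans (by linarith) (neg_le_abs _)
  have dich : (∀ t ∈ Set.Icc a b, l ≤ deriv g t) ∨ (∀ t ∈ Set.Icc a b, deriv g t ≤ -l) := by
    by_contra! hcon
    obtain ⟨⟨s, hs, hs'⟩, ⟨t, ht, ht'⟩⟩ := hcon
    have hs2 : deriv g s ≤ 0 := by
      have := h s hs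
      rcases le_abs.1 this with h | h <;> linarith
    have ht2 : 0 ≤ deriv g t := by
      have := h t ht
      rcases le_abs.1 this with h | h <;> linarith
    obtain ⟨x, hx, hx0⟩ := (isPreconnected_Icc (a := a) (b := b)).intermediate_value hs ht hc.continuousOn
      (show (0:ℝ) ∈ Set.Icc _ _ from ⟨hs2, ht2⟩)
    have := h x hx
    rw [hx0, abs_zero] at this
    linarith
  rcases dich with hh | hh
  · exact ⟨Or.inl fun t ht => hl.le.trans (hh t ht), key g hd hh⟩
  · refine ⟨Or.inr fun t ht => (hh t ht).trans (by linarith), ?_⟩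
    have := key (fun t => - g t) hd.neg (fun t ht => by
      rw [show (fun t => - g t) = -g from rfl, deriv.neg]; linarith [hh t ht])
    simpa using this

lemma aux_step (F : ℝ → ℂ) (hF : Continuous F) (hF1 : ∀ t, ‖F t‖ ≤ 1) (g : ℝ → ℝ)
    (a b l t0 c : ℝ) (k : ℕ) (hk : 1 ≤ k) (hl : 0 < l)  (hc : 0 ≤ c)
    (ht0 : t0 ∈ Set.Icc a b)
    (h : ∀ t ∈ Set.Icc a b, l * |t - t0| ≤ |g t|)
    (H : ∀ a' b', a ≤ a' → a' ≤ b' → b' ≤ b → ∀ δ > 0, (∀ t ∈ Set.Icc a' b', δ ≤ |g t|) →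
      ‖∫ t in a'..b', F t‖ ≤ c * δ ^ (-(1 / (k:ℝ)))) :
    ‖∫ t in a..b, F t‖ ≤ (2 + 2 * c) * l ^ (-(1 / ((k + 1 : ℕ):ℝ))) := by
  set η := l ^ (-(1 / ((k + 1 : ℕ):ℝ))) with hη
  have hη0 : 0 < η := Real.rpow_pos_of_pos hl _
  have hk' : (0:ℝ) < k := by exact_mod_cast hk
  have e1 : (l * η) ^ (-(1 / (k:ℝ))) = η := by
    have : l * η = l ^ (1 + -(1 / ((k + 1 : ℕ):ℝ))) := by
      rw [Real.rpow_add hl, Real.rpow_one]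
    rw [this, ← Real.rpow_mul hl.le, hη]
    congr 1
    push_cast
    field_simp
    ring
  have triv : ∀ x y, x ≤ y → ‖∫ t in x..y, F t‖ ≤ y - x := by
    intro x y hxy
    have := intervalIntegral.norm_integral_le_of_norm_le_const (a := x) (b := y) (f := F) (C := 1) (fun t _ => hF1 t)
    rwa [abs_of_nonneg (by linarith), one_mul] at this
  have ii : ∀ x y, IntervalIntegrable F volume x y := fun x y => hF.intervalIntegrable _ _
  have left : ‖∫ t in a..t0, F t‖ ≤ (1 + c) * η := by
    rcases le_or_gt (t0 - η) a with h1 | h1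
    · have := triv a t0 ht0.1
      nlinarith
    · have h2 := triv (t0 - η) t0 (by linarith)
      have h3 := H a (t0 - η) le_rfl h1.le (by linarith [ht0.2]) (l * η) (by positivity) (by
        intro t ht
        refine le_trans ?_ (h t ⟨ht.1, by linarith [ht.2, ht0.2]⟩)
        gcongr
        rw [abs_of_nonpos (by linarith [ht.2])]
        linarith [ht.2])
      rw [e1] at h3
      rw [← intervalIntegral.integral_add_adjacent_intervals (ii a (t0 - η)) (ii _ _)]
      refine (norm_add_le _ _).trans ?_
      linarith
  have right : ‖∫ t in t0..b, F t‖ ≤ (1 + c) * η := by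
    rcases le_or_gt b (t0 + η) with h1 | h1
    · have := triv t0 b ht0.2
      nlinarith
    · have h2 := triv t0 (t0 + η) (by linarith)
      have h3 := H (t0 + η) b (by linarith [ht0.1]) h1.le le_rfl (l * η) (by positivity) (by
        intro t ht
        refine le_trans ?_ (h t ⟨by linarith [ht.1, ht0.1], ht.2⟩)
        gcongr
        rw [abs_of_nonneg (by linarith [ht.1])]
        linarith [ht.1])
      rw [e1] at h3
      rw [← intervalIntegral.integral_add_adjacent_intervals (ii t0 (t0 + η)) (ii _ _)]
      refine (norm_add_le _ _).trans ?_
      linarith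
  rw [← intervalIntegral.integral_add_adjacent_intervals (ii a t0) (ii _ _)]
  refine (norm_add_le _ _).trans ?_
  linarith

lemma aux_vdc (k : ℕ) : ∃ c : ℝ, 0 ≤ c ∧ ∀ (φ : ℝ → ℝ), ContDiff ℝ ⊤ φ → ∀ a b l : ℝ, a ≤ b → 0 < l →
    (∀ t ∈ Set.Icc a b, l ≤ |iteratedDeriv (k + 2) φ t|) →
    ‖∫ t in a..b, Complex.exp (Complex.I * (φ t : ℂ))‖ ≤ c * l ^ (-(1 / ((k + 2 : ℕ) : ℝ))) := by
  have gen : ∀ (φ : ℝ → ℝ), ContDiff ℝ ⊤ φ → ∀ t, ‖Complex.exp (Complex.I * (φ t : ℂ))‖ ≤ 1 := by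
    intro φ hφ t
    rw [mul_comm]; exact (Complex.norm_exp_ofReal_mul_I _).le
  have c1 : ∀ (φ : ℝ → ℝ), ContDiff ℝ ⊤ φ → ∀ j, ContDiff ℝ 1 (iteratedDeriv j φ) := by
    intro φ hφ j
    rw [contDiff_one_iff_deriv, ← iteratedDeriv_succ]
    exact ⟨hφ.differentiable_iteratedDeriv j (by simp), hφ.continuous_iteratedDeriv _ (by simp)⟩
  induction k with
  | zero =>
    refine ⟨2 + 2 * 4, by norm_num, fun φ hφ a b l hab hl h => ?_⟩
    rw [iteratedDeriv_succ] at h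
    obtain ⟨hs, t0, ht0, h0⟩ := aux_t0 _ (c1 φ hφ 1) a b l hab hl h
    rw [← iteratedDeriv_succ] at hs
    have := hφ.continuous
    refine aux_step _ (by fun_prop) (gen φ hφ) (iteratedDeriv 1 φ) a b l t0 4 1 le_rfl hl (by norm_num) ht0 h0 ?_
    intro a' b' ha hab' hb δ hδ hh
    have := aux_base1 φ hφ a' b' δ hab' hδ hh (hs.imp (fun H t ht => H t ⟨ha.trans ht.1, ht.2.trans hb⟩)
      (fun H t ht => H t ⟨ha.trans ht.1, ht.2.trans hb⟩))
    simpa [Real.rpow_neg_one, div_eq_mul_inv] using this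
  | succ k ih =>
    obtain ⟨c, hc, ih⟩ := ih
    refine ⟨2 + 2 * c, by positivity, fun φ hφ a b l hab hl h => ?_⟩
    rw [show k + 1 + 2 = (k + 2) + 1 by ring, iteratedDeriv_succ] at h
    obtain ⟨hs, t0, ht0, h0⟩ := aux_t0 _ (c1 φ hφ (k + 2)) a b l hab hl h
    have := hφ.continuous
    refine aux_step _ (by fun_prop) (gen φ hφ) (iteratedDeriv (k + 2) φ) a b l t0 c (k + 2) (by omega) hl hc ht0 h0 ?_
    intro a' b' ha hab' hb δ hδ hh
    exact ih φ hφ a' b' δ hab' hδ hh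

lemma aux_unif (A : ℕ) (c M L : ℝ) (hc : 0 < c) (hM : 0 ≤ M) : ∃ B : ℝ, 0 ≤ B ∧
    ∀ (φ : ℝ → ℝ), ContDiff ℝ ⊤ φ → ∀ a b l : ℝ, a ≤ b → b - a ≤ L → 1 ≤ l →
    (∀ t ∈ Set.Icc a b, |iteratedDeriv 2 φ t| ≤ M * l) →
    ∀ k, 1 ≤ k → k ≤ A →
    (∀ t ∈ Set.Icc a b, c * l ≤ |iteratedDeriv k φ t|) →
    ‖∫ t in a..b, Complex.exp (Complex.I * (φ t : ℂ))‖ ≤ B * l ^ (-(1 / (A : ℝ))) := by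
  choose v hv0 hv using aux_vdc
  set w : ℕ → ℝ := fun k => v k * c ^ (-(1 / ((k + 2 : ℕ) : ℝ))) with hw
  have hw0 : ∀ k, 0 ≤ w k := fun k => mul_nonneg (hv0 k) (Real.rpow_nonneg hc.le _)
  have hS : 0 ≤ ∑ k ∈ Finset.range (A + 1), w k := Finset.sum_nonneg fun k _ => hw0 k
  have hL0 : 0 ≤ |L| := abs_nonneg L
  refine ⟨(2 / c + M / c ^ 2 * |L|) + ∑ k ∈ Finset.range (A + 1), w k, by positivity, ?_⟩
  intro φ hφ a b l hab hL hl h2 k hk hkA hh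
  have hl0 : 0 < l := by linarith
  have pw : ∀ j : ℕ, 1 ≤ j → j ≤ A → l ^ (-(1 / (j : ℝ))) ≤ l ^ (-(1 / (A : ℝ))) := by
    intro j hj hjA
    apply Real.rpow_le_rpow_of_exponent_le hl
    have : (0:ℝ) < j := by exact_mod_cast hj
    have : (j:ℝ) ≤ A := by exact_mod_cast hjA
    gcongr
  have hlA : 0 ≤ l ^ (-(1 / (A : ℝ))) := Real.rpow_nonneg hl0.le _
  rcases Nat.lt_or_ge k 2 with hk2 | hk2
  · obtain rfl : k = 1 := by omega
    have := aux_base2 φ hφ a b (c * l) (M * l) hab (by positivity) hh h2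
    have p1 := pw 1 le_rfl hkA
    simp only [Nat.cast_one, div_one, Real.rpow_neg_one] at p1
    calc _ ≤ 2 / (c * l) + M * l / (c * l) ^ 2 * (b - a) := this
      _ ≤ 2 / (c * l) + M * l / (c * l) ^ 2 * |L| := by
        gcongr; exact hL.trans (le_abs_self _)
      _ = (2 / c + M / c ^ 2 * |L|) * l⁻¹ := by field_simp
      _ ≤ (2 / c + M / c ^ 2 * |L|) * l ^ (-(1 / (A : ℝ))) := by gcongr
      _ ≤ _ := mul_le_mul_of_nonneg_right (by linarith) hlA
  · obtain ⟨j, rfl⟩ := Nat.exists_eq_add_of_le' hk2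
    have := hv j φ hφ a b (c * l) hab (by positivity) hh
    rw [Real.mul_rpow hc.le hl0.le, ← mul_assoc] at this
    have hj : w j ≤ ∑ k ∈ Finset.range (A + 1), w k :=
      Finset.single_le_sum (fun k _ => hw0 k) (Finset.mem_range.2 (by omega))
    have h3 : 0 ≤ 2 / c + M / c ^ 2 * |L| := by positivity
    calc _ ≤ w j * l ^ (-(1 / ((j + 2 : ℕ) : ℝ))) := this
      _ ≤ w j * l ^ (-(1 / (A : ℝ))) := mul_le_mul_of_nonneg_left (pw _ (by omega) hkA) (hw0 j)
      _ ≤ _ := mul_le_mul_of_nonneg_right (by linarith) hlA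

lemma aux_nondeg (a b A : ℕ) (ha : a + 3 ≤ A) (hb : b + 3 ≤ A) (p q : ℝ) (hpq : p ≠ 0 ∨ q ≠ 0) (t : ℝ) :
    ∃ k, 1 ≤ k ∧ k ≤ A ∧ iteratedDeriv k (fun s => p * Real.cos s ^ (a + 3) + q * Real.sin s ^ (b + 3)) t ≠ 0 := by
  by_contra! hcon
  set f : ℝ → ℝ := fun s => p * Real.cos s ^ (a + 3) + q * Real.sin s ^ (b + 3) with hf
  set g : ℝ → ℝ := fun s => -(p * (a + 3)) * Real.cos s ^ (a + 1) + (q * (b + 3)) * Real.sin s ^ (b + 1) with hg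
  have hdf : deriv f = Real.sin * (Real.cos * g) := by
    ext s
    have h1 := (((Real.hasDerivAt_cos s).pow (a + 3)).const_mul p).add
      (((Real.hasDerivAt_sin s).pow (b + 3)).const_mul q)
    refine h1.deriv.trans ?_
    simp only [hg, Pi.mul_apply]
    push_cast
    ring
  have as : AnalyticAt ℝ Real.sin t := by fun_prop
  have ac : AnalyticAt ℝ Real.cos t := by fun_prop
  have ag : AnalyticAt ℝ g t := by fun_prop
  have hord : (A : ℕ∞) ≤ analyticOrderAt Real.sin t + (analyticOrderAt Real.cos t + analyticOrderAt g t) := by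
    rw [← analyticOrderAt_mul ac ag, ← analyticOrderAt_mul as (ac.mul ag), ← hdf,
      natCast_le_analyticOrderAt_iff_iteratedDeriv_eq_zero (by rw [hdf]; exact as.mul (ac.mul ag))]
    intro i hi
    rw [← iteratedDeriv_succ']
    exact hcon _ (by omega) (by omega)
  have hsc := Real.sin_sq_add_cos_sq t
  by_cases hs : Real.sin t = 0
  · have hc : Real.cos t ≠ 0 := by intro h; rw [hs, h] at hsc; norm_num at hsc
    have os : analyticOrderAt Real.sin t = 1 :=
      as.analyticOrderAt_eq_one_of_zero_deriv_ne_zero hs (by simpa using hc)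
    have oc : analyticOrderAt Real.cos t = 0 := ac.analyticOrderAt_eq_zero.2 hc
    rw [os, oc, zero_add] at hord
    have hg0 : g t = 0 := by
      by_contra h
      rw [ag.analyticOrderAt_eq_zero.2 h] at hord
      norm_cast at hord; omega
    have hp : p = 0 := by
      simp only [hg, hs] at hg0
      have : (a:ℝ) + 3 ≠ 0 := by positivity
      simpa [hc, this] using hg0
    have hq : q ≠ 0 := by simpa [hp] using hpq
    have : g = (fun _ => q * ((b:ℝ) + 3)) * Real.sin ^ (b + 1) := by
      ext s; simp [hg, hp]
    rw [this, analyticOrderAt_mul analyticAt_const (as.pow _), analyticOrderAt_pow as, os,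
      analyticAt_const.analyticOrderAt_eq_zero.2 (by positivity)] at hord
    simp only [nsmul_eq_mul, mul_one, zero_add] at hord
    norm_cast at hord; omega
  by_cases hc : Real.cos t = 0
  · have oc : analyticOrderAt Real.cos t = 1 :=
      ac.analyticOrderAt_eq_one_of_zero_deriv_ne_zero hc (by simpa using hs)
    have os : analyticOrderAt Real.sin t = 0 := as.analyticOrderAt_eq_zero.2 hs
    rw [os, oc, zero_add] at hord
    have hg0 : g t = 0 := by
      by_contra h
      rw [ag.analyticOrderAt_eq_zero.2 h] at hord
      norm_cast at hord; omega
    have hq : q = 0 := by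
      simp only [hg, hc] at hg0
      have : (b:ℝ) + 3 ≠ 0 := by positivity
      simpa [hs, this] using hg0
    have hp : p ≠ 0 := by simpa [hq] using hpq
    have : g = (fun _ => -(p * ((a:ℝ) + 3))) * Real.cos ^ (a + 1) := by
      ext s; simp [hg, hq]
    rw [this, analyticOrderAt_mul analyticAt_const (ac.pow _), analyticOrderAt_pow ac, oc,
      analyticAt_const.analyticOrderAt_eq_zero.2 (neg_ne_zero.2 (by positivity))] at hord
    simp only [nsmul_eq_mul, mul_one, zero_add] at hord
    norm_cast at hord; omega
  · rw [as.analyticOrderAt_eq_zero.2 hs, ac.analyticOrderAt_eq_zero.2 hc, zero_add, zero_add,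
      natCast_le_analyticOrderAt_iff_iteratedDeriv_eq_zero ag] at hord
    have g0 : g t = 0 := by simpa using hord 0 (by omega)
    have g1 : deriv g t = 0 := by simpa using hord 1 (by omega)
    have h1 := (((Real.hasDerivAt_cos t).pow (a + 1)).const_mul (-(p * (a + 3)))).add
      (((Real.hasDerivAt_sin t).pow (b + 1)).const_mul (q * (b + 3)))
    have g2 := h1.deriv.symm.trans g1
    simp only [Nat.add_sub_cancel] at g2
    push_cast at g2
    simp only [hg] at g0
    set c := Real.cos t
    set s := Real.sin t
    have key : (p * (a + 3)) * c ^ (a + 1) * (((a:ℝ) + 1) * s ^ 2 + (b + 1) * c ^ 2) = 0 := by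
      linear_combination s * c * g2 - (b + 1) * c ^ 2 * g0
    have pos : (((a:ℝ) + 1) * s ^ 2 + (b + 1) * c ^ 2) ≠ 0 := by positivity
    have hX := (mul_eq_zero.1 key).resolve_right pos
    have hp : p = 0 := by
      have : (a:ℝ) + 3 ≠ 0 := by positivity
      simpa [hc, this] using hX
    have hq : q = 0 := by
      have : (b:ℝ) + 3 ≠ 0 := by positivity
      simpa [hp, hs, this] using g0
    simp [hp, hq] at hpq

lemma aux_circle (a b A : ℕ) (ha : a + 3 ≤ A) (hb : b + 3 ≤ A) : ∃ C : ℝ, 0 ≤ C ∧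
    ∀ P Q : ℝ, P ≠ 0 →
      ‖∫ t in (0:ℝ)..(2 * Real.pi), Complex.exp (Complex.I *
        ((P * Real.cos t ^ (a + 3) + Q * Real.sin t ^ (b + 3) : ℝ) : ℂ))‖ ≤ C * |P| ^ (-(1 / (A : ℝ))) := by
  have cu : ContDiff ℝ ⊤ (fun s => Real.cos s ^ (a + 3)) := by fun_prop
  have cv : ContDiff ℝ ⊤ (fun s => Real.sin s ^ (b + 3)) := by fun_prop
  set u : ℝ → ℝ := fun s => Real.cos s ^ (a + 3) with hu
  set v : ℝ → ℝ := fun s => Real.sin s ^ (b + 3) with hv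
  set D : ℕ → (ℝ × ℝ) × ℝ → ℝ := fun k w => w.1.1 * iteratedDeriv k u w.2 + w.1.2 * iteratedDeriv k v w.2 with hDdef
  have cf : ∀ p q : ℝ, ContDiff ℝ ⊤ (fun s => p * u s + q * v s) := fun p q => by fun_prop
  have hD : ∀ k p q t, iteratedDeriv k (fun s => p * u s + q * v s) t = D k ((p, q), t) := by
    intro k p q t
    have cu' : ContDiffAt ℝ k u t := (cu.of_le le_top).contDiffAt
    have cv' : ContDiffAt ℝ k v t := (cv.of_le le_top).contDiffAt
    rw [iteratedDeriv_fun_add (by fun_prop) (by fun_prop), iteratedDeriv_const_mul p cu',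
      iteratedDeriv_const_mul q cv']
  have cD : ∀ k, Continuous (D k) := by
    intro k
    have h1 : Continuous (iteratedDeriv k u) := cu.continuous_iteratedDeriv k (by simp)
    have h2 : Continuous (iteratedDeriv k v) := cv.continuous_iteratedDeriv k (by simp)
    simp only [hDdef]
    fun_prop
  have hpi := Real.pi_pos
  set K : Set ((ℝ × ℝ) × ℝ) := Metric.sphere (0 : ℝ × ℝ) 1 ×ˢ Set.Icc 0 (2 * Real.pi) with hK
  have hKc : IsCompact K := (isCompact_sphere _ _).prod isCompact_Icc
  have hKn : K.Nonempty := ⟨((1, 0), 0), by simp [hK, Prod.norm_def, hpi.le]⟩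
  -- lower bound
  obtain ⟨w0, hw0, hmin⟩ := hKc.exists_isMinOn hKn
    (f := fun w => ∑ k ∈ Finset.Icc 1 A, |D k w|) (by fun_prop)
  set m0 := ∑ k ∈ Finset.Icc 1 A, |D k w0| with hm0
  have hm0pos : 0 < m0 := by
    obtain ⟨⟨p, q⟩, t⟩ := w0
    have hpq : p ≠ 0 ∨ q ≠ 0 := by
      by_contra! h
      simp [hK, h.1, h.2] at hw0
    obtain ⟨k, hk1, hk2, hk3⟩ := aux_nondeg a b A ha hb p q hpq t
    refine Finset.sum_pos' (fun _ _ => abs_nonneg _) ⟨k, Finset.mem_Icc.2 ⟨hk1, hk2⟩, ?_⟩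
    rw [← hD]
    exact abs_pos.2 hk3
  have hA : (0:ℝ) < A := by exact_mod_cast (by omega : 0 < A)
  set c := m0 / (2 * A) with hc
  have hcpos : 0 < c := by positivity
  have hlow : ∀ w ∈ K, ∃ k, 1 ≤ k ∧ k ≤ A ∧ 2 * c ≤ |D k w| := by
    intro w hw
    by_contra! hcon
    have h1 : m0 ≤ ∑ k ∈ Finset.Icc 1 A, |D k w| := hmin hw
    have h2 : ∑ k ∈ Finset.Icc 1 A, |D k w| < ∑ k ∈ Finset.Icc 1 A, 2 * c := by
      refine Finset.sum_lt_sum_of_nonempty ⟨1, by simp; omega⟩ fun k hk => ?_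
      rw [Finset.mem_Icc] at hk
      exact hcon k hk.1 hk.2
    have h3 : ∑ k ∈ Finset.Icc 1 A, 2 * c = m0 := by
      simp [hc]; field_simp
    linarith
  -- upper bound
  obtain ⟨w1, hw1, hmax⟩ := hKc.exists_isMaxOn hKn
    (f := fun w => ∑ k ∈ Finset.range (A + 2), |D k w|) (by fun_prop)
  set M := ∑ k ∈ Finset.range (A + 2), |D k w1| with hM
  have hM0 : 0 ≤ M := Finset.sum_nonneg fun _ _ => abs_nonneg _
  have hup : ∀ w ∈ K, ∀ k < A + 2, |D k w| ≤ M := by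
    intro w hw k hk
    exact (Finset.single_le_sum (f := fun k => |D k w|) (fun _ _ => abs_nonneg _)
      (Finset.mem_range.2 hk)).trans (hmax hw)
  obtain ⟨B, hB0, hB⟩ := aux_unif A c M (2 * Real.pi) hcpos hM0
  obtain ⟨N, hN⟩ := exists_nat_gt (M * (2 * Real.pi) / c)
  have hN0 : (0:ℝ) < N := lt_of_le_of_lt (by positivity) hN
  set h := 2 * Real.pi / N with hh
  have hh0 : 0 < h := by positivity
  have hMh : M * h ≤ c := by
    rw [div_lt_iff₀ hcpos] at hN
    rw [hh, ← mul_div_assoc, div_le_iff₀ hN0]; linarith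
  refine ⟨N * B + 2 * Real.pi, by positivity, fun P Q hP => ?_⟩
  set l := ‖(P, Q)‖ with hl
  have hPl : |P| ≤ l := by simp [hl, Prod.norm_def]
  have hP0 : 0 < |P| := abs_pos.2 hP
  have hl0 : 0 < l := by linarith
  set F : ℝ → ℂ := fun t => Complex.exp (Complex.I * ((P * u t + Q * v t : ℝ) : ℂ)) with hF
  have cF : Continuous F := by
    have := cu.continuous
    have := cv.continuous
    fun_prop
  have nF : ∀ t, ‖F t‖ ≤ 1 := fun t => by
    simp only [hF]; rw [mul_comm]; exact (Complex.norm_exp_ofReal_mul_I _).le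
  change ‖∫ t in (0:ℝ)..(2 * Real.pi), F t‖ ≤ _
  have hlP : l ^ (-(1 / (A : ℝ))) ≤ |P| ^ (-(1 / (A : ℝ))) :=
    Real.rpow_le_rpow_of_nonpos hP0 hPl (by rw [neg_nonpos]; positivity)
  refine le_trans ?_ (mul_le_mul_of_nonneg_left hlP (by positivity))
  have hlA : 0 ≤ l ^ (-(1 / (A : ℝ))) := Real.rpow_nonneg hl0.le _
  rcases le_or_gt 1 l with h1 | h1
  · have hsc : ∀ k t, iteratedDeriv k (fun s => P * u s + Q * v s) t = l * D k ((P / l, Q / l), t) := by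
      intro k t
      rw [hD]
      simp only [hDdef]
      field_simp
    have hmem : ∀ t ∈ Set.Icc 0 (2 * Real.pi), ((P / l, Q / l), t) ∈ K := by
      intro t ht
      refine ⟨?_, ht⟩
      have : ((P / l, Q / l) : ℝ × ℝ) = l⁻¹ • (P, Q) := by
        simp [div_eq_inv_mul]
      simp only [mem_sphere_zero_iff_norm, this, norm_smul, norm_inv, Real.norm_of_nonneg hl0.le]
      exact inv_mul_cancel₀ hl0.ne'
    have piece : ∀ i < N, ‖∫ t in ((i:ℕ) * h)..((i + 1 : ℕ) * h), F t‖ ≤ B * l ^ (-(1 / (A : ℝ))) := by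
      intro i hi
      have hsub : Set.Icc (i * h) ((i + 1 : ℕ) * h) ⊆ Set.Icc 0 (2 * Real.pi) := by
        refine Set.Icc_subset_Icc (by positivity) ?_
        have : ((i + 1 : ℕ) : ℝ) ≤ N := by exact_mod_cast hi
        calc _ ≤ N * h := by gcongr
          _ = _ := by rw [hh]; field_simp
      have hle : i * h ≤ (i + 1 : ℕ) * h := by push_cast; nlinarith
      have hlen : (i + 1 : ℕ) * h - i * h = h := by push_cast; ring
      have hm := hmem (i * h) (hsub ⟨le_rfl, hle⟩)
      obtain ⟨k, hk1, hk2, hk3⟩ := hlow _ hm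
      refine hB (fun s => P * u s + Q * v s) (cf P Q) _ _ l hle ?_ h1 ?_ k hk1 hk2 ?_
      · rw [hlen, hh]
        apply div_le_self (by positivity)
        have : 1 ≤ N := by omega
        exact_mod_cast this
      · intro t ht
        rw [hsc, abs_mul, abs_of_pos hl0, mul_comm]
        gcongr
        exact hup _ (hmem t (hsub ht)) 2 (by omega)
      · intro t ht
        rw [hsc, abs_mul, abs_of_pos hl0, mul_comm]
        gcongr
        have lip := (convex_Icc (i * h) ((i + 1 : ℕ) * h)).norm_image_sub_le_of_norm_hasDerivWithin_le
          (f := fun t => D k ((P / l, Q / l), t)) (f' := fun t => D (k + 1) ((P / l, Q / l), t)) (C := M)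
          (x := i * h) (y := t) (fun s hs => by
            have := aux_iter _ (cf (P / l) (Q / l)) k s
            rw [hD] at this
            refine HasDerivAt.hasDerivWithinAt ?_
            have e : (fun t => D k ((P / l, Q / l), t)) =
                iteratedDeriv k (fun s => P / l * u s + Q / l * v s) := by
              funext r
              rw [hD]
            rw [e]
            exact this) (fun s hs => hup _ (hmem s (hsub hs)) (k + 1) (by omega)) ⟨le_rfl, hle⟩ ht
        simp only [Real.norm_eq_abs] at lip
        have h4 : |t - i * h| ≤ h := by
          rw [abs_of_nonneg (by linarith [ht.1])]
          linarith [ht.2]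
        have h5 : M * |t - i * h| ≤ c := le_trans (by gcongr) hMh
        have h6 := abs_sub_abs_le_abs_sub (D k ((P / l, Q / l), i * h)) (D k ((P / l, Q / l), t))
        rw [abs_sub_comm] at h6
        linarith
    have hsum := intervalIntegral.sum_integral_adjacent_intervals (f := F) (μ := volume)
      (a := fun i : ℕ => (i:ℝ) * h) (n := N) (fun k _ => cF.intervalIntegrable _ _)
    have e0 : ((0:ℕ):ℝ) * h = 0 := by simp
    have eN : (N:ℝ) * h = 2 * Real.pi := by rw [hh]; field_simp
    rw [e0, eN] at hsum
    rw [← hsum]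
    refine (norm_sum_le _ _).trans ?_
    refine (Finset.sum_le_sum fun i hi => piece i (Finset.mem_range.1 hi)).trans ?_
    rw [Finset.sum_const, Finset.card_range, nsmul_eq_mul, ← mul_assoc]
    gcongr
    linarith
  · have := intervalIntegral.norm_integral_le_of_norm_le_const (a := 0) (b := 2 * Real.pi) (f := F) (C := 1) (fun t _ => nF t)
    rw [abs_of_nonneg (by linarith), one_mul, sub_zero] at this
    have h2 : 1 ≤ l ^ (-(1 / (A : ℝ))) :=
      Real.one_le_rpow_of_pos_of_le_one_of_nonpos hl0 h1.le (by rw [neg_nonpos]; positivity)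
    have h3 : 0 ≤ N * B := by positivity
    nlinarith

lemma aux_one : IntegrableOn (fun x : ℝ => |x| ^ (-(1/2) : ℝ)) (Set.Icc (-1) 1) := by
  have h1 : IntervalIntegrable (fun x : ℝ => |x| ^ (-(1/2) : ℝ)) volume 0 1 := by
    refine (intervalIntegral.intervalIntegrable_rpow' (r := -(1/2)) (by norm_num)).congr ?_
    intro x hx
    rw [Set.uIoc_of_le zero_le_one] at hx
    simp only [abs_of_pos hx.1]
  have h2 : IntervalIntegrable (fun x : ℝ => |x| ^ (-(1/2) : ℝ)) volume (-1) 0 := by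
    rw [IntervalIntegrable.iff_comp_neg]
    simpa using h1.symm
  exact (intervalIntegrable_iff_integrableOn_Icc_of_le (by norm_num)).1 (h2.trans h1)

lemma aux_pi (k : ℕ) : ∫⁻ u in Set.univ.pi (fun _ : Fin k => Set.Icc (-1:ℝ) 1),
    ∏ i, ‖u i‖ₑ ^ (-(1/2) : ℝ) < ⊤ := by
  have h := Integrable.fintype_prod (ι := Fin k) (f := fun _ x => |x| ^ (-(1/2) : ℝ))
    (μ := fun _ => (volume : Measure ℝ).restrict (Set.Icc (-1) 1)) (fun _ => aux_one)
  rw [← Measure.restrict_pi_pi, ← volume_pi] at h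
  have h2 := h.lintegral_lt_top
  refine lt_of_le_of_lt (le_of_eq ?_) h2
  refine lintegral_congr_ae (ae_restrict_of_ae ?_)
  have : ∀ᵐ u : Fin k → ℝ, ∀ i, u i ≠ 0 := by
    rw [ae_all_iff]
    intro i
    exact Measure.ae_eval_ne (fun _ : Fin k => (volume : Measure ℝ)) i 0
  filter_upwards [this] with u hu
  rw [ENNReal.ofReal_prod_of_nonneg (fun i _ => by positivity)]
  refine Finset.prod_congr rfl fun i _ => ?_
  rw [← ENNReal.ofReal_rpow_of_pos (abs_pos.2 (hu i)), Real.enorm_eq_ofReal_abs]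

noncomputable def auxF (k : ℕ) (j : Fin (k + 1)) (e : ℝ) (u : Fin k → ℝ) : EuclideanSpace ℝ (Fin (k + 1)) :=
  ‖(WithLp.toLp 2 (j.insertNth e u : Fin (k + 1) → ℝ) : EuclideanSpace ℝ (Fin (k + 1)))‖⁻¹ •
    (WithLp.toLp 2 (j.insertNth e u : Fin (k + 1) → ℝ) : EuclideanSpace ℝ (Fin (k + 1)))

lemma aux_norm1 (k : ℕ) (j : Fin (k + 1)) (e : ℝ) (he : |e| = 1) (u : Fin k → ℝ) :
    1 ≤ ‖(WithLp.toLp 2 (j.insertNth e u : Fin (k + 1) → ℝ) : EuclideanSpace ℝ (Fin (k + 1)))‖ := by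
  have := PiLp.norm_apply_le (WithLp.toLp 2 (j.insertNth e u : Fin (k + 1) → ℝ) : EuclideanSpace ℝ (Fin (k + 1))) j
  simpa [he] using this

lemma aux_norm2 (k : ℕ) (j : Fin (k + 1)) (e : ℝ) (he : |e| = 1) (u : Fin k → ℝ)
    (hu : ∀ i, |u i| ≤ 1) :
    ‖(WithLp.toLp 2 (j.insertNth e u : Fin (k + 1) → ℝ) : EuclideanSpace ℝ (Fin (k + 1)))‖ ≤ k + 1 := by
  rw [EuclideanSpace.norm_eq]
  refine Real.sqrt_le_iff.2 ⟨by positivity, ?_⟩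
  rw [Fin.sum_univ_succAbove _ j]
  simp only [Fin.insertNth_apply_same, Fin.insertNth_apply_succAbove, Real.norm_eq_abs, he]
  have : ∑ i, |u i| ^ 2 ≤ ∑ i : Fin k, (1:ℝ) := Finset.sum_le_sum fun i _ => by
    have := hu i
    have := abs_nonneg (u i)
    nlinarith
  simp at this
  have hk : (0:ℝ) ≤ k := by positivity
  simp
  nlinarith

lemma aux_normalize {E : Type*} [NormedAddCommGroup E] [NormedSpace ℝ E] (x y : E) (hx : 1 ≤ ‖x‖) (hy : 1 ≤ ‖y‖) :
    ‖‖x‖⁻¹ • x - ‖y‖⁻¹ • y‖ ≤ 2 * ‖x - y‖ := by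
  have hx0 : 0 < ‖x‖ := by linarith
  have hy0 : 0 < ‖y‖ := by linarith
  have e : ‖x‖⁻¹ • x - ‖y‖⁻¹ • y = ‖x‖⁻¹ • (x - y) + (‖x‖⁻¹ - ‖y‖⁻¹) • y := by
    rw [smul_sub, sub_smul]; abel
  have h1 : ‖‖x‖⁻¹ • (x - y)‖ ≤ ‖x - y‖ := by
    rw [norm_smul, norm_inv, norm_norm]
    exact mul_le_of_le_one_left (norm_nonneg _) (inv_le_one_of_one_le₀ hx)
  have h2 : ‖(‖x‖⁻¹ - ‖y‖⁻¹) • y‖ ≤ ‖x - y‖ := by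
    rw [norm_smul, Real.norm_eq_abs]
    have : (‖x‖⁻¹ - ‖y‖⁻¹) = (‖y‖ - ‖x‖) * (‖x‖⁻¹ * ‖y‖⁻¹) := by field_simp
    rw [this, abs_mul, abs_of_pos (by positivity : 0 < ‖x‖⁻¹ * ‖y‖⁻¹)]
    have h3 : |‖y‖ - ‖x‖| ≤ ‖x - y‖ := by rw [norm_sub_rev]; exact abs_norm_sub_norm_le y x
    calc _ = |‖y‖ - ‖x‖| * ‖x‖⁻¹ := by field_simp
      _ ≤ |‖y‖ - ‖x‖| * 1 := by gcongr; exact inv_le_one_of_one_le₀ hx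
      _ ≤ _ := by linarith
  rw [e]
  exact (norm_add_le _ _).trans (by linarith)

lemma aux_lip (k : ℕ) : ∃ K : NNReal, ∀ (j : Fin (k + 1)) (e : ℝ), |e| = 1 → LipschitzWith K (auxF k j e) := by
  have h0 := PiLp.lipschitzWith_toLp 2 (fun _ : Fin (k + 1) => ℝ)
  set K0 : NNReal := (Fintype.card (Fin (k + 1)) : NNReal) ^ (1 / (2:ℝ≥0∞)).toReal
  refine ⟨2 * K0, fun j e he => LipschitzWith.of_dist_le_mul fun x y => ?_⟩
  rw [dist_eq_norm]
  refine (aux_normalize _ _ (aux_norm1 k j e he x) (aux_norm1 k j e he y)).trans ?_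
  rw [← dist_eq_norm]
  have h1 := h0.dist_le_mul (j.insertNth e x : Fin (k + 1) → ℝ) (j.insertNth e y : Fin (k + 1) → ℝ)
  rw [Fin.dist_insertNth_insertNth, dist_self, max_eq_right dist_nonneg] at h1
  push_cast
  linarith

lemma aux_cover (k : ℕ) (x : EuclideanSpace ℝ (Fin (k + 1))) (hx : ‖x‖ = 1) :
    ∃ j e u, |e| = 1 ∧ (e = 1 ∨ e = -1) ∧ (∀ i, |u i| ≤ 1) ∧ auxF k j e u = x := by
  obtain ⟨j, hj⟩ := Finite.exists_max (fun i => |x i|)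
  have hpos : 0 < |x j| := by
    by_contra! h
    have : x = 0 := by
      ext i
      have := (hj i).trans h
      simpa using this
    simp [this] at hx
  have hxj : x j ≠ 0 := abs_pos.1 hpos
  refine ⟨j, x j / |x j|, fun i => x (j.succAbove i) / |x j|, ?_, ?_, ?_, ?_⟩
  · rw [abs_div, abs_abs, div_self hpos.ne']
  · rcases abs_choice (x j) with h | h
    · left; rw [h, div_self hxj]
    · right; rw [h, div_neg, div_self hxj]
  · intro i
    rw [abs_div, abs_abs, div_le_one hpos]
    exact hj _
  · have : (WithLp.toLp 2 (j.insertNth (x j / |x j|) (fun i => x (j.succAbove i) / |x j|) : Fin (k + 1) → ℝ) :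
        EuclideanSpace ℝ (Fin (k + 1))) = |x j|⁻¹ • x := by
      ext i
      refine Fin.succAboveCases j ?_ (fun i => ?_) i
      · simp [div_eq_inv_mul]
      · simp [div_eq_inv_mul]
    rw [auxF, this, norm_smul, hx, smul_smul]
    simp [hpos.ne']

lemma aux_le (k : ℕ) : ∃ K : NNReal, (μH[(k:ℝ)] : Measure (EuclideanSpace ℝ (Fin (k + 1)))).restrict (Metric.sphere 0 1)
    ≤ ∑ p : Fin (k + 1) × Bool, ((K : ℝ≥0∞) ^ (k : ℝ)) •
      (((volume : Measure (Fin k → ℝ)).restrict (Set.univ.pi (fun _ : Fin k => Set.Icc (-1:ℝ) 1))).map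
        (auxF k p.1 (if p.2 then 1 else -1))) := by
  obtain ⟨K, hK⟩ := aux_lip k
  refine ⟨K, Measure.le_iff.2 fun s hs => ?_⟩
  have he : ∀ b : Bool, |(if b then (1:ℝ) else -1)| = 1 := by intro b; cases b <;> simp
  set Q := Set.univ.pi (fun _ : Fin k => Set.Icc (-1:ℝ) 1) with hQ
  rw [Measure.restrict_apply hs, Measure.finsetSum_apply]
  have hsub : s ∩ Metric.sphere 0 1 ⊆ ⋃ p ∈ (Finset.univ : Finset (Fin (k + 1) × Bool)),
      auxF k p.1 (if p.2 then 1 else -1) '' (auxF k p.1 (if p.2 then 1 else -1) ⁻¹' s ∩ Q) := by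
    rintro x ⟨hxs, hx⟩
    obtain ⟨j, e, u, -, he, hu, rfl⟩ := aux_cover k x (by simpa using hx)
    simp only [Finset.mem_univ, Set.iUnion_true, Set.mem_iUnion]
    have huQ : u ∈ Q := fun i _ => abs_le.1 (hu i)
    rcases he with rfl | rfl
    · exact ⟨(j, true), u, ⟨by simpa using hxs, huQ⟩, by simp⟩
    · exact ⟨(j, false), u, ⟨by simpa using hxs, huQ⟩, by simp⟩
  refine (measure_mono hsub).trans ((measure_biUnion_finset_le _ _).trans ?_)
  refine Finset.sum_le_sum fun p _ => ?_
  have hl := hK p.1 _ (he p.2)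
  rw [Measure.smul_apply, Measure.map_apply hl.continuous.measurable hs,
    Measure.restrict_apply (hl.continuous.measurable hs), smul_eq_mul]
  refine (hl.hausdorffMeasure_image_le (by positivity) _).trans (le_of_eq ?_)
  have := hausdorffMeasure_pi_real (ι := Fin k)
  rw [Fintype.card_fin] at this
  rw [this]

lemma aux_H (k : ℕ) : ∫⁻ x in Metric.sphere (0 : EuclideanSpace ℝ (Fin (k + 1))) 1,
    ∏ i, ‖x i‖ₑ ^ (-(1/2) : ℝ) ∂μH[(k:ℝ)] < ⊤ := by
  obtain ⟨K, hK⟩ := aux_le k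
  obtain ⟨K', hK'⟩ := aux_lip k
  have he : ∀ b : Bool, |(if b then (1:ℝ) else -1)| = 1 := by intro b; cases b <;> simp
  refine lt_of_le_of_lt (lintegral_mono' hK le_rfl) ?_
  rw [lintegral_finsetSum_measure]
  refine ENNReal.sum_lt_top.2 fun p _ => ?_
  rw [lintegral_smul_measure]
  refine ENNReal.mul_lt_top (ENNReal.rpow_lt_top_of_nonneg (by positivity) ENNReal.coe_ne_top) ?_
  have hl := hK' p.1 _ (he p.2)
  rw [lintegral_map (by fun_prop) hl.continuous.measurable]
  set e : ℝ := if p.2 then 1 else -1 with hedef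
  have he1 : |e| = 1 := he p.2
  have hb : ∀ u ∈ Set.univ.pi (fun _ : Fin k => Set.Icc (-1:ℝ) 1),
      ∏ i, ‖auxF k p.1 e u i‖ₑ ^ (-(1/2) : ℝ) ≤
        (ENNReal.ofReal (k + 1) ^ (1/2 : ℝ)) ^ (k + 1) * ∏ i, ‖u i‖ₑ ^ (-(1/2) : ℝ) := by
    intro u hu
    have n1 := aux_norm1 k p.1 e he1 u
    have n2 := aux_norm2 k p.1 e he1 u (fun i => abs_le.2 (hu i trivial))
    set v := (WithLp.toLp 2 (p.1.insertNth e u : Fin (k + 1) → ℝ) : EuclideanSpace ℝ (Fin (k + 1))) with hv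
    have hcoord : ∀ i, ‖auxF k p.1 e u i‖ₑ ^ (-(1/2) : ℝ) ≤
        ENNReal.ofReal (k + 1) ^ (1/2 : ℝ) * ‖v i‖ₑ ^ (-(1/2) : ℝ) := by
      intro i
      have : auxF k p.1 e u i = ‖v‖⁻¹ * v i := by simp [auxF, hv]
      rw [this, enorm_mul, ENNReal.mul_rpow_of_ne_top enorm_ne_top enorm_ne_top]
      gcongr
      rw [Real.enorm_eq_ofReal (by positivity), ENNReal.ofReal_inv_of_pos (by linarith), ENNReal.inv_rpow,
        ENNReal.rpow_neg, inv_inv]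
      gcongr
    refine (Finset.prod_le_prod' fun i _ => hcoord i).trans ?_
    rw [Finset.prod_mul_distrib, Finset.prod_const, Finset.card_univ, Fintype.card_fin,
      Fin.prod_univ_succAbove _ p.1]
    refine le_of_eq ?_
    simp [hv, Real.enorm_eq_ofReal_abs, he1]
  refine lt_of_le_of_lt (setLIntegral_mono' (MeasurableSet.univ_pi fun _ => measurableSet_Icc) hb) ?_
  rw [lintegral_const_mul' _ _ (by
    refine ENNReal.pow_ne_top (ENNReal.rpow_ne_top_of_nonneg (by norm_num) ENNReal.ofReal_ne_top))]
  refine ENNReal.mul_lt_top (lt_top_iff_ne_top.2 ?_) (aux_pi k)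
  exact ENNReal.pow_ne_top (ENNReal.rpow_ne_top_of_nonneg (by norm_num) ENNReal.ofReal_ne_top)

noncomputable def auxR {n : ℕ} (p q : Fin n) (t : ℝ) (x : EuclideanSpace ℝ (Fin n)) : EuclideanSpace ℝ (Fin n) :=
  WithLp.toLp 2 (fun i => if i = p then Real.cos t * x p - Real.sin t * x q
    else if i = q then Real.sin t * x p + Real.cos t * x q else x i)

lemma auxR_norm {n : ℕ} (p q : Fin n) (hpq : p ≠ q) (t : ℝ) (x : EuclideanSpace ℝ (Fin n)) :
    ‖auxR p q t x‖ = ‖x‖ := by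
  rw [EuclideanSpace.norm_eq, EuclideanSpace.norm_eq]
  congr 1
  rw [← sub_eq_zero, ← Finset.sum_sub_distrib, Fintype.sum_eq_add p q hpq]
  · simp only [auxR, if_true, if_neg hpq.symm, Real.norm_eq_abs, sq_abs]
    have := Real.sin_sq_add_cos_sq t
    linear_combination (x p ^ 2 + x q ^ 2) * this
  · rintro i ⟨hi1, hi2⟩
    simp [auxR, hi1, hi2]

lemma auxR_isom {n : ℕ} (p q : Fin n) (hpq : p ≠ q) (t : ℝ) : Isometry (auxR p q t) := by
  refine Isometry.of_dist_eq fun x y => ?_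
  rw [dist_eq_norm, dist_eq_norm, ← auxR_norm p q hpq t (x - y)]
  congr 1
  ext i
  simp only [auxR, PiLp.sub_apply]
  split_ifs <;> ring

noncomputable def auxRE {n : ℕ} (p q : Fin n) (hpq : p ≠ q) (t : ℝ) :
    EuclideanSpace ℝ (Fin n) ≃ᵢ EuclideanSpace ℝ (Fin n) :=
  IsometryEquiv.mk' (auxR p q t) (auxR p q (-t)) (fun x => by
    ext i
    have := Real.sin_sq_add_cos_sq t
    simp only [auxR, if_true, if_neg hpq.symm, Real.cos_neg, Real.sin_neg]
    split_ifs with h1 h2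
    · rw [h1]; linear_combination (x p) * this
    · rw [h2]; linear_combination (x q) * this
    · rfl) (auxR_isom p q hpq t)

lemma auxR_mp {n : ℕ} (p q : Fin n) (hpq : p ≠ q) (t d : ℝ) :
    MeasurePreserving (auxR p q t) ((μH[d] : Measure (EuclideanSpace ℝ (Fin n))).restrict (Metric.sphere 0 1))
      ((μH[d] : Measure (EuclideanSpace ℝ (Fin n))).restrict (Metric.sphere 0 1)) := by
  have h := ((auxRE p q hpq t).measurePreserving_hausdorffMeasure d).restrict_preimage
    (s := Metric.sphere 0 1) Metric.isClosed_sphere.measurableSet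
  have e : (auxRE p q hpq t) ⁻¹' (Metric.sphere 0 1) = Metric.sphere 0 1 := by
    ext x
    simp only [Set.mem_preimage, mem_sphere_zero_iff_norm]
    change ‖auxR p q t x‖ = 1 ↔ _
    rw [auxR_norm p q hpq]
  rw [e] at h
  exact h

lemma auxR_cont {n : ℕ} (p q : Fin n) :
    Continuous (fun z : ℝ × EuclideanSpace ℝ (Fin n) => auxR p q z.1 z.2) := by
  refine (PiLp.continuous_toLp 2 _).comp (continuous_pi fun i => ?_)
  split_ifs <;> fun_prop

lemma aux_one_le (s : ℝ) (hs : |s| ≤ 1) : (1:ℝ≥0∞) ≤ ‖s‖ₑ ^ (-(1/2) : ℝ) := by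
  have h : ‖s‖ₑ ≤ 1 := by
    rw [Real.enorm_eq_ofReal_abs]; exact ENNReal.ofReal_le_one.2 hs
  rw [ENNReal.rpow_neg, ENNReal.one_le_inv]
  exact ENNReal.rpow_le_one h (by norm_num)

lemma aux_rbound (k A a : ℕ) (haA : a ≤ A) (hA : 0 < A) (p q : Fin (k + 1)) (hpq : p ≠ q)
    (x : EuclideanSpace ℝ (Fin (k + 1))) (hx : ‖x‖ = 1) (hp : x p ≠ 0) (hq : x q ≠ 0) (r : ℝ) (hr : 0 < r)
    (hr2 : r ^ 2 = x p ^ 2 + x q ^ 2) :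
    ENNReal.ofReal ((r ^ a) ^ (-(1 / (A : ℝ)))) ≤ ∏ i, ‖x i‖ₑ ^ (-(1/2) : ℝ) := by
  have hc : ∀ i, |x i| ≤ 1 := fun i => by
    have := PiLp.norm_apply_le x i
    rwa [hx] at this
  have hr1 : r ≤ 1 := by
    have h1 : r ^ 2 ≤ 1 := by
      rw [hr2]
      have h2 := EuclideanSpace.norm_sq_eq x
      rw [hx] at h2
      have h3 : ∑ i ∈ ({p, q} : Finset (Fin (k + 1))), ‖x i‖ ^ 2 ≤ ∑ i, ‖x i‖ ^ 2 :=
        Finset.sum_le_sum_of_subset_of_nonneg (Finset.subset_univ _) fun _ _ _ => by positivity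
      rw [Finset.sum_pair hpq] at h3
      simp only [Real.norm_eq_abs, sq_abs] at h2 h3
      linarith
    nlinarith
  have hA' : (0:ℝ) < A := by exact_mod_cast hA
  have s1 : (r ^ a) ^ (-(1 / (A : ℝ))) ≤ r⁻¹ := by
    calc _ ≤ (r ^ A) ^ (-(1 / (A : ℝ))) :=
          Real.rpow_le_rpow_of_nonpos (by positivity) (pow_le_pow_of_le_one hr.le hr1 haA)
            (by rw [neg_nonpos]; positivity)
      _ = r⁻¹ := by
          rw [← Real.rpow_natCast, ← Real.rpow_mul hr.le, ← Real.rpow_neg_one]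
          congr 1; field_simp
  have hp' : 0 < |x p| := abs_pos.2 hp
  have hq' : 0 < |x q| := abs_pos.2 hq
  have s2 : r⁻¹ ≤ |x p| ^ (-(1/2) : ℝ) * |x q| ^ (-(1/2) : ℝ) := by
    rw [← Real.mul_rpow hp'.le hq'.le]
    have h1 : |x p| * |x q| ≤ r ^ 2 := by
      rw [hr2, ← sq_abs (x p), ← sq_abs (x q)]
      nlinarith [sq_nonneg (|x p| - |x q|)]
    calc r⁻¹ = (r ^ 2) ^ (-(1/2) : ℝ) := by
          rw [← Real.rpow_natCast, ← Real.rpow_mul hr.le, ← Real.rpow_neg_one]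
          congr 1; norm_num
      _ ≤ _ := Real.rpow_le_rpow_of_nonpos (by positivity) h1 (by norm_num)
  refine (ENNReal.ofReal_le_ofReal (s1.trans s2)).trans ?_
  rw [ENNReal.ofReal_mul (by positivity), ← ENNReal.ofReal_rpow_of_pos hp', ← ENNReal.ofReal_rpow_of_pos hq',
    ← Real.enorm_eq_ofReal_abs, ← Real.enorm_eq_ofReal_abs,
    ← Finset.prod_pair (f := fun i => ‖x i‖ₑ ^ (-(1/2) : ℝ)) hpq]
  exact Finset.prod_le_prod_of_subset_of_one_le' (Finset.subset_univ _) fun i _ _ => aux_one_le _ (hc i)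

lemma aux_inner (k A : ℕ) (α : Fin (k + 1) → ℕ) (hα : ∀ j, 3 ≤ α j) (hαA : ∀ j, α j ≤ A)
    (p q : Fin (k + 1)) (hpq : p ≠ q) : ∃ C : ℝ, 0 < C ∧ ∀ l : Fin (k + 1) → ℝ, l p ≠ 0 →
    ∀ x : EuclideanSpace ℝ (Fin (k + 1)), ‖x‖ = 1 →
    ‖∫ t in (0:ℝ)..(2 * Real.pi), Complex.exp (Complex.I *
      Complex.ofReal (∑ j, (auxR p q t x j) ^ (α j) * l j))‖ₑ ≤
      ENNReal.ofReal (C * |l p| ^ (-(1 / (A : ℝ)))) * ∏ i, ‖x i‖ₑ ^ (-(1/2) : ℝ) := by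
  obtain ⟨a, ha⟩ := Nat.exists_eq_add_of_le' (hα p)
  obtain ⟨b, hb⟩ := Nat.exists_eq_add_of_le' (hα q)
  obtain ⟨C, hC0, hC⟩ := aux_circle a b A (ha ▸ hαA p) (hb ▸ hαA q)
  refine ⟨C + 1, by positivity, fun l hl x hx => ?_⟩
  have hlp : 0 < |l p| := abs_pos.2 hl
  have hlA : 0 < |l p| ^ (-(1 / (A : ℝ))) := Real.rpow_pos_of_pos hlp _
  have hc : ∀ i, |x i| ≤ 1 := fun i => by
    have := PiLp.norm_apply_le x i
    rwa [hx] at this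
  by_cases h0 : ∃ i, x i = 0
  · obtain ⟨i, hi⟩ := h0
    have : ∏ i, ‖x i‖ₑ ^ (-(1/2) : ℝ) = ⊤ := by
      refine top_le_iff.1 (le_trans (le_of_eq ?_) (Finset.single_le_prod' (f := fun i => ‖x i‖ₑ ^ (-(1/2) : ℝ))
        (fun j _ => aux_one_le _ (hc j)) (Finset.mem_univ i)))
      simp [hi]
    rw [this, ENNReal.mul_top (by rw [Ne, ENNReal.ofReal_eq_zero, not_le]; positivity)]
    exact le_top
  push Not at h0
  set z : ℂ := ⟨x p, x q⟩ with hz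
  have hz0 : z ≠ 0 := fun h => h0 p (by simpa [hz] using congrArg Complex.re h)
  set r := ‖z‖ with hr
  have hr0 : 0 < r := norm_pos_iff.2 hz0
  set s := Complex.arg z with hs
  have e1 : x p = r * Real.cos s := (Complex.norm_mul_cos_arg z).symm
  have e2 : x q = r * Real.sin s := (Complex.norm_mul_sin_arg z).symm
  have hr2 : r ^ 2 = x p ^ 2 + x q ^ 2 := by
    rw [e1, e2]; linear_combination -(r ^ 2) * Real.sin_sq_add_cos_sq s
  set rest : ℝ := ∑ i ∈ (Finset.univ.erase p).erase q, x i ^ α i * l i with hrest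
  set G : ℝ → ℂ := fun t => Complex.exp (Complex.I *
        (((l p * r ^ (a + 3)) * Real.cos t ^ (a + 3) + (l q * r ^ (b + 3)) * Real.sin t ^ (b + 3) : ℝ) : ℂ)) with hG
  have hph : ∀ t, Complex.exp (Complex.I * Complex.ofReal (∑ j, (auxR p q t x j) ^ (α j) * l j))
      = Complex.exp (Complex.I * (rest : ℂ)) * G (t + s) := by
    intro t
    have : ∑ j, (auxR p q t x j) ^ (α j) * l j = rest + ((l p * r ^ (a + 3)) * Real.cos (t + s) ^ (a + 3) +
        (l q * r ^ (b + 3)) * Real.sin (t + s) ^ (b + 3)) := by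
      rw [← Finset.add_sum_erase _ _ (Finset.mem_univ p),
        ← Finset.add_sum_erase (Finset.univ.erase p) _ (Finset.mem_erase.2 ⟨hpq.symm, Finset.mem_univ q⟩)]
      have h1 : auxR p q t x p = r * Real.cos (t + s) := by
        simp only [auxR, if_true, e1, e2, Real.cos_add]; ring
      have h2 : auxR p q t x q = r * Real.sin (t + s) := by
        simp only [auxR, if_true, if_neg hpq.symm, e1, e2, Real.sin_add]; ring
      have h3 : ∑ i ∈ (Finset.univ.erase p).erase q, (auxR p q t x i) ^ α i * l i = rest := by
        refine Finset.sum_congr rfl fun i hi => ?_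
        simp only [Finset.mem_erase] at hi
        simp [auxR, hi.1, hi.2.1]
      rw [h1, h2, h3, ha, hb]
      ring
    rw [this, Complex.ofReal_add, mul_add, Complex.exp_add]
  have hper : Function.Periodic G (2 * Real.pi) := by
    intro t
    simp only [hG, Real.cos_add_two_pi, Real.sin_add_two_pi]
  have hint : ∫ t in (0:ℝ)..(2 * Real.pi), G (t + s) = ∫ t in (0:ℝ)..(2 * Real.pi), G t := by
    rw [intervalIntegral.integral_comp_add_right, zero_add, add_comm, hper.intervalIntegral_add_eq s 0, zero_add]
  simp_rw [hph]
  rw [intervalIntegral.integral_const_mul, hint, enorm_mul]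
  have n1 : ‖Complex.exp (Complex.I * (rest : ℂ))‖ₑ = 1 := by
    rw [← ofReal_norm, mul_comm, Complex.norm_exp_ofReal_mul_I, ENNReal.ofReal_one]
  rw [n1, one_mul, ← ofReal_norm]
  have hA0 : 0 < A := by have := hα p; have := hαA p; omega
  have main := hC (l p * r ^ (a + 3)) (l q * r ^ (b + 3)) (mul_ne_zero hl (by positivity))
  rw [abs_mul, abs_of_pos (by positivity : 0 < r ^ (a + 3)), Real.mul_rpow hlp.le (by positivity)] at main
  have hrA : 0 ≤ (r ^ (a + 3)) ^ (-(1 / (A : ℝ))) := by positivity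
  have main2 : ‖∫ t in (0:ℝ)..(2 * Real.pi), G t‖ ≤ ((C + 1) * |l p| ^ (-(1 / (A : ℝ)))) *
      (r ^ (a + 3)) ^ (-(1 / (A : ℝ))) := by
    refine main.trans ?_
    rw [← mul_assoc]
    gcongr
    linarith
  refine (ENNReal.ofReal_le_ofReal main2).trans ?_
  rw [ENNReal.ofReal_mul (by positivity)]
  gcongr
  exact aux_rbound k A (a + 3) (ha ▸ hαA p) hA0 p q hpq x hx (h0 p) (h0 q) r hr0 hr2

lemma aux_fin (k : ℕ) : IsFiniteMeasure
    ((μH[(k:ℝ)] : Measure (EuclideanSpace ℝ (Fin (k + 1)))).restrict (Metric.sphere 0 1)) := by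
  refine ⟨?_⟩
  rw [← lintegral_one]
  refine lt_of_le_of_lt ?_ (aux_H k)
  refine setLIntegral_mono' Metric.isClosed_sphere.measurableSet fun x hx => ?_
  refine Finset.one_le_prod' fun i _ => aux_one_le _ ?_
  have := PiLp.norm_apply_le x i
  rwa [mem_sphere_zero_iff_norm.1 hx] at this

lemma aux_main (k A : ℕ) (α : Fin (k + 1) → ℕ) (hα : ∀ j, 3 ≤ α j) (hαA : ∀ j, α j ≤ A)
    (p q : Fin (k + 1)) (hpq : p ≠ q) : ∃ C : ℝ, 0 ≤ C ∧ ∀ l : Fin (k + 1) → ℝ, l p ≠ 0 →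
    ‖∫ x in Metric.sphere (0 : EuclideanSpace ℝ (Fin (k + 1))) 1, Complex.exp (Complex.I *
      Complex.ofReal (∑ j, (x j) ^ (α j) * l j)) ∂(μH[(k : ℝ)])‖ ≤ C * |l p| ^ (-(1 / (A : ℝ))) := by
  obtain ⟨C, hC0, hC⟩ := aux_inner k A α hα hαA p q hpq
  set H := ∫⁻ x in Metric.sphere (0 : EuclideanSpace ℝ (Fin (k + 1))) 1,
    ∏ i, ‖x i‖ₑ ^ (-(1/2) : ℝ) ∂μH[(k:ℝ)] with hH
  have hHt : H < ⊤ := aux_H k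
  refine ⟨C * H.toReal, by positivity, fun l hl => ?_⟩
  set ν := (μH[(k:ℝ)] : Measure (EuclideanSpace ℝ (Fin (k + 1)))).restrict (Metric.sphere 0 1) with hν
  haveI : IsFiniteMeasure ν := aux_fin k
  set f : EuclideanSpace ℝ (Fin (k + 1)) → ℂ := fun x => Complex.exp (Complex.I *
      Complex.ofReal (∑ j, (x j) ^ (α j) * l j)) with hf
  have cf : Continuous f := by fun_prop
  have nf : ∀ x, ‖f x‖ ≤ 1 := fun x => by
    simp only [hf]; rw [mul_comm]; exact (Complex.norm_exp_ofReal_mul_I _).le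
  have hpi := Real.pi_pos
  have inv : ∀ t, ∫ x, f (auxR p q t x) ∂ν = ∫ x, f x ∂ν := by
    intro t
    exact (auxR_mp p q hpq t k).integral_comp (auxRE p q hpq t).toHomeomorph.measurableEmbedding f
  have avg : ∫ x, (∫ t in (0:ℝ)..(2 * Real.pi), f (auxR p q t x)) ∂ν = (2 * Real.pi : ℝ) • ∫ x, f x ∂ν := by
    simp_rw [intervalIntegral.integral_of_le (by positivity : 0 ≤ 2 * Real.pi)]
    rw [← integral_integral_swap (f := fun t x => f (auxR p q t x))]
    · simp_rw [inv]
      simp [Real.volume_real_Ioc, hpi.le]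
    · refine Integrable.of_bound ?_ 1 (Filter.Eventually.of_forall fun z => nf _)
      exact (cf.comp (auxR_cont p q)).aestronglyMeasurable
  set c := C * |l p| ^ (-(1 / (A : ℝ))) with hc
  have hc0 : 0 ≤ c := by positivity
  have bd : ‖(2 * Real.pi : ℝ) • ∫ x, f x ∂ν‖ₑ ≤ ENNReal.ofReal c * H := by
    rw [← avg]
    refine (enorm_integral_le_lintegral_enorm _).trans ?_
    rw [hH, ← lintegral_const_mul' _ _ ENNReal.ofReal_ne_top]
    refine setLIntegral_mono' Metric.isClosed_sphere.measurableSet fun x hx => ?_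
    exact hC l hl x (mem_sphere_zero_iff_norm.1 hx)
  have bd2 := ENNReal.toReal_mono (ENNReal.mul_ne_top ENNReal.ofReal_ne_top hHt.ne) bd
  rw [ENNReal.toReal_mul, ENNReal.toReal_ofReal hc0, toReal_enorm, norm_smul, Real.norm_of_nonneg (by positivity)] at bd2
  have h3 := Real.pi_gt_three
  have : ‖∫ x, f x ∂ν‖ ≤ 2 * Real.pi * ‖∫ x, f x ∂ν‖ := by
    nlinarith [norm_nonneg (∫ x, f x ∂ν)]
  calc _ ≤ c * H.toReal := this.trans bd2
    _ = _ := by rw [hc]; ring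

theorem sphere_kernel_estimate (n : ℕ) (hn : 2 ≤ n) (α : Fin n → ℕ)
    (hα : ∀ j, 3 ≤ α j) (αmax : ℕ) (hαmax : αmax = Finset.univ.sup α)
    (m : ℕ) (hm : 3 ≤ m) (γ : ℝ) (hγ : (αmax : ℝ) ≤ γ) :
    ∃ C : ℝ, ∀ y z : EuclideanSpace ℝ (Fin n),
      (∑ i, |y i| ^ m) ≠ (∑ i, |z i| ^ m) →
      ‖∫ x in Metric.sphere (0 : EuclideanSpace ℝ (Fin n)) 1,
          Complex.exp (Complex.I *
            Complex.ofReal (∑ j, (x j) ^ (α j) * ((y j) ^ m - (z j) ^ m)))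
            ∂(μH[(n : ℝ) - 1])‖
        ≤ C * |(∑ i, |y i| ^ m) - ∑ i, |z i| ^ m| ^ (-(1 / γ)) := by
  obtain ⟨k, rfl⟩ : ∃ k, n = k + 1 := ⟨n - 1, by omega⟩
  have hk : 1 ≤ k := by omega
  have hαA : ∀ j, α j ≤ αmax := fun j => hαmax ▸ Finset.le_sup (Finset.mem_univ j)
  have hdim : ((k + 1 : ℕ) : ℝ) - 1 = (k : ℝ) := by push_cast; ring
  rw [hdim]
  haveI : Nontrivial (Fin (k + 1)) := Fin.nontrivial_iff_two_le.2 hn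
  have hex : ∀ p : Fin (k + 1), ∃ q, p ≠ q := fun p => (exists_ne p).imp fun _ h => h.symm
  choose qq hqq using hex
  choose C hC0 hC using fun p => aux_main k αmax α hα hαA p (qq p) (hqq p)
  set ν := (μH[(k:ℝ)] : Measure (EuclideanSpace ℝ (Fin (k + 1)))).restrict (Metric.sphere 0 1) with hν
  haveI : IsFiniteMeasure ν := aux_fin k
  set S := ∑ p, C p with hS
  have hS0 : 0 ≤ S := Finset.sum_nonneg fun p _ => hC0 p
  have hA : (0:ℝ) < αmax := by
    have := hα 0; have := hαA 0
    exact_mod_cast (by omega : 0 < αmax)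
  have hγ0 : 0 < γ := by linarith
  set N : ℝ := ((k + 1 : ℕ) : ℝ) with hN
  have hN0 : 0 < N := by positivity
  have hNA : 0 ≤ (N⁻¹) ^ (-(1 / (αmax : ℝ))) := by positivity
  refine ⟨S * (N⁻¹) ^ (-(1 / (αmax : ℝ))) + ν.real Set.univ, fun y z hyz => ?_⟩
  set D := |(∑ i, |y i| ^ m) - ∑ i, |z i| ^ m| with hD
  have hD0 : 0 < D := abs_pos.2 (sub_ne_zero.2 hyz)
  set l : Fin (k + 1) → ℝ := fun j => (y j) ^ m - (z j) ^ m with hl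
  obtain ⟨p, hp⟩ := Finite.exists_max (fun i => |l i|)
  have hDl : D ≤ N * |l p| := by
    rw [hD, ← Finset.sum_sub_distrib]
    refine (Finset.abs_sum_le_sum_abs _ _).trans ?_
    have : ∀ i ∈ Finset.univ, abs (|y i| ^ m - |z i| ^ m) ≤ |l p| := by
      intro i _
      refine le_trans ?_ (hp i)
      rw [← abs_pow, ← abs_pow]
      exact abs_abs_sub_abs_le_abs_sub _ _
    refine (Finset.sum_le_sum this).trans ?_
    simp [hN]
  have hDγ : 0 ≤ D ^ (-(1 / γ)) := by positivity
  rcases le_or_gt 1 D with h1 | h1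
  · have hlp : 0 < |l p| := by
      by_contra! h
      nlinarith
    have hb := hC p l (abs_pos.1 hlp)
    have s1 : |l p| ^ (-(1 / (αmax : ℝ))) ≤ (N⁻¹ * D) ^ (-(1 / (αmax : ℝ))) := by
      refine Real.rpow_le_rpow_of_nonpos (by positivity) ?_ (by rw [neg_nonpos]; positivity)
      rw [inv_mul_le_iff₀ hN0]; exact hDl
    rw [Real.mul_rpow (by positivity) hD0.le] at s1
    have s2 : D ^ (-(1 / (αmax : ℝ))) ≤ D ^ (-(1 / γ)) := by
      apply Real.rpow_le_rpow_of_exponent_le h1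
      gcongr
    have s3 : C p ≤ S := Finset.single_le_sum (fun p _ => hC0 p) (Finset.mem_univ p)
    calc _ ≤ C p * |l p| ^ (-(1 / (αmax : ℝ))) := hb
      _ ≤ S * (N⁻¹ ^ (-(1 / (αmax : ℝ))) * D ^ (-(1 / γ))) := by
        refine mul_le_mul s3 (s1.trans ?_) (by positivity) hS0
        gcongr
      _ = S * N⁻¹ ^ (-(1 / (αmax : ℝ))) * D ^ (-(1 / γ)) := by ring
      _ ≤ _ := by
        gcongr
        linarith [measureReal_nonneg (μ := ν) (s := Set.univ)]
  · have hb : ‖∫ x, Complex.exp (Complex.I *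
            Complex.ofReal (∑ j, (x j) ^ (α j) * ((y j) ^ m - (z j) ^ m))) ∂ν‖ ≤ 1 * ν.real Set.univ :=
      norm_integral_le_of_norm_le_const (Filter.Eventually.of_forall fun x => by
        rw [mul_comm]; exact (Complex.norm_exp_ofReal_mul_I _).le)
    have h2 : 1 ≤ D ^ (-(1 / γ)) :=
      Real.one_le_rpow_of_pos_of_le_one_of_nonpos hD0 h1.le (by rw [neg_nonpos]; positivity)
    have h3 : 0 ≤ S * N⁻¹ ^ (-(1 / (αmax : ℝ))) := by positivity
    have h4 := measureReal_nonneg (μ := ν) (s := Set.univ)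
    refine hb.trans ?_
    nlinarith
end
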